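/- arXiv:2206.07335 — 12 statements merged into one kernel-verified Lean document; each statement's English description precedes it below -/
import Mathlib

section
/- Let E = ℝ^D, let f, δ : E → E, and let φ : ℝ → E → E satisfy φ(0, x) = x and (d/dt)φ(t, x) = f(φ(t, x)) for all t ∈ ℝ and x ∈ E. Let Φ : ℝ → (E → E) → (E → E) be a one-step method (for step size h and vector field g it produces the map Φ_h(g) : E → E), let p ≥ 1 be an integer, and let (f_k)_{k≥0} be a sequence of maps E → E with f_0 = f. Assume: (order-p condition) for every x ∈ E, Φ_h(f)(x) − φ(h, x) − h^{p+1}·δ(x) = o(h^{p+1}) as h → 0; and (inverse modified equation recursion) for every integer k ≥ 1 and every x ∈ E, φ(h, x) − Φ_h(y ↦ Σ_{j=0}^{k−1} h^j f_j(y))(x) − h^{k+1}·f_k(x) = o(h^{k+1}) as h → 0. Then f_k(x) = 0 for every x ∈ E and every k with 1 ≤ k ≤ p−1, and f_p(x) = −δ(x) for every x ∈ E. -/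
open Filter Topology Asymptotics

/-!
The leading coefficient of the error of a method is unique. As long as `f₁, …, f_{k-1}` vanish, the
truncated series is `f₀` itself, so the recursion says that the method applied to `f₀` has the error
`-h ^ (k + 1) f_k + o(h ^ (k + 1))`. Comparing this with `h ^ (p + 1) δ + o(h ^ (p + 1))` forces
`f_k = 0` for `k < p`, inductively, and then `-f_p = δ`.
-/

theorem sum_range_pow_smul_eq_zeroth {R X M : Type*} [Semiring R] [AddCommMonoid M]
    [Module R M] {fs : ℕ → X → M} {k : ℕ} (hk : 1 ≤ k)
    (vanish : ∀ j, 1 ≤ j → j < k → fs j = 0) (h : R) :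
    (fun y => ∑ j ∈ Finset.range k, h ^ j • fs j y) = fs 0 := by
  funext y
  rw [Finset.sum_eq_single_of_mem 0 (Finset.mem_range.mpr hk), pow_zero, one_smul]
  intro j hj hj0
  rw [vanish j (Nat.one_le_iff_ne_zero.mpr hj0) (Finset.mem_range.mp hj), Pi.zero_apply, smul_zero]

section InverseModifiedSeries

variable {𝕜 X E : Type*} [NontriviallyNormedField 𝕜] [NormedAddCommGroup E] [NormedSpace 𝕜 E]

/-- The one-step method `Φ`, applied to the vector field `f`, approximates the reference maps `ψ h`
with pointwise error `h ^ (n + 1) • c x + o(h ^ (n + 1))`. The coefficient `c` may be zero, so `n`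
is only a lower bound for the order of the method. Vector fields live on an arbitrary type `X` of
points. -/
def HasLeadingError (Φ : 𝕜 → (X → E) → X → E) (ψ : 𝕜 → X → E) (f : X → E) (n : ℕ) (c : X → E) :
    Prop :=
  ∀ x, (fun h : 𝕜 => Φ h f x - ψ h x - h ^ (n + 1) • c x) =o[𝓝 0] fun h : 𝕜 => h ^ (n + 1)

/-- The formal series `∑ k, h ^ k • fs k` is an inverse modified vector field: applying `Φ` to its
truncations reproduces the reference maps `ψ h`, with `fs k` correcting the error of the truncation
before `k`. The term `fs 0` is left free. -/
def IsInverseModifiedSeries (Φ : 𝕜 → (X → E) → X → E) (ψ : 𝕜 → X → E) (fs : ℕ → X → E) : Prop :=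
  ∀ k, 1 ≤ k → ∀ x,
    (fun h : 𝕜 => ψ h x - Φ h (fun y => ∑ j ∈ Finset.range k, h ^ j • fs j y) x
      - h ^ (k + 1) • fs k x) =o[𝓝 0] fun h : 𝕜 => h ^ (k + 1)

theorem eq_zero_of_pow_smul_isLittleO_pow {n : ℕ} {v : E}
    (hv : (fun h : 𝕜 => h ^ n • v) =o[𝓝 0] fun h : 𝕜 => h ^ n) : v = 0 := by
  by_contra hv0
  have pow_isBigO : (fun h : 𝕜 => h ^ n) =O[𝓝 0] fun h : 𝕜 => h ^ n • v :=
    .of_bound ‖v‖⁻¹ <| .of_forall fun h => by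
      rw [norm_smul, mul_comm, mul_inv_cancel_right₀ (norm_ne_zero_iff.mpr hv0)]
  have frequently_pow_ne_zero : ∃ᶠ h : 𝕜 in 𝓝 0, h ^ n ≠ 0 :=
    (eventually_mem_nhdsWithin.frequently.filter_mono nhdsWithin_le_nhds :
      ∃ᶠ h : 𝕜 in 𝓝 0, h ∈ ({0}ᶜ : Set 𝕜)).mono fun _ hh => pow_ne_zero n hh
  exact isLittleO_irrefl frequently_pow_ne_zero (pow_isBigO.trans_isLittleO hv)

theorem pow_smul_const_isLittleO_pow {m n : ℕ} (hmn : m < n) (v : E) :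
    (fun h : 𝕜 => h ^ n • v) =o[𝓝 0] fun h : 𝕜 => h ^ m := by
  simpa using (isLittleO_pow_pow (𝕜 := 𝕜) hmn).smul_isBigO
    (isBigO_const_const v (one_ne_zero (α := 𝕜)) (𝓝 0))

variable {Φ : 𝕜 → (X → E) → X → E} {ψ : 𝕜 → X → E}

theorem HasLeadingError.unique {f c c' : X → E} {n : ℕ} (hc : HasLeadingError Φ ψ f n c)
    (hc' : HasLeadingError Φ ψ f n c') : c = c' := by
  funext x
  refine sub_eq_zero.mp (eq_zero_of_pow_smul_isLittleO_pow (𝕜 := 𝕜) (n := n + 1) ?_)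
  refine ((hc' x).sub (hc x)).congr_left fun h => ?_
  rw [smul_sub]
  abel

theorem HasLeadingError.zero_of_lt {f c : X → E} {m n : ℕ} (hc : HasLeadingError Φ ψ f n c)
    (hmn : m < n) : HasLeadingError Φ ψ f m 0 := by
  intro x
  have hmn' : m + 1 < n + 1 := Nat.succ_lt_succ hmn
  have remainder := (hc x).trans (isLittleO_pow_pow hmn')
  refine (remainder.add (pow_smul_const_isLittleO_pow hmn' (c x))).congr_left fun h => ?_
  rw [Pi.zero_apply, smul_zero, sub_zero, sub_add_cancel]

theorem IsInverseModifiedSeries.hasLeadingError {fs : ℕ → X → E}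
    (hfs : IsInverseModifiedSeries Φ ψ fs) {k : ℕ} (hk : 1 ≤ k)
    (vanish : ∀ j, 1 ≤ j → j < k → fs j = 0) : HasLeadingError Φ ψ (fs 0) k (-fs k) := by
  intro x
  refine (hfs k hk x).neg_left.congr_left fun h => ?_
  rw [sum_range_pow_smul_eq_zeroth hk vanish, Pi.neg_apply, smul_neg]
  abel

theorem IsInverseModifiedSeries.eq_zero_of_lt {fs : ℕ → X → E} {δ : X → E} {p : ℕ}
    (hfs : IsInverseModifiedSeries Φ ψ fs) (hδ : HasLeadingError Φ ψ (fs 0) p δ)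
    {k : ℕ} (hk : 1 ≤ k) (hkp : k < p) : fs k = 0 := by
  induction k using Nat.strong_induction_on with
  | _ k ih =>
    have vanish : ∀ j, 1 ≤ j → j < k → fs j = 0 := fun j hj hjk => ih j hjk hj (hjk.trans hkp)
    exact neg_eq_zero.mp ((hfs.hasLeadingError hk vanish).unique (hδ.zero_of_lt hkp))

theorem stmt0_general {fs : ℕ → X → E} {δ : X → E} {p : ℕ} (hp : 1 ≤ p)
    (hδ : HasLeadingError Φ ψ (fs 0) p δ) (hfs : IsInverseModifiedSeries Φ ψ fs) :
    (∀ k, 1 ≤ k → k < p → fs k = 0) ∧ fs p = -δ := by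
  have vanish : ∀ k, 1 ≤ k → k < p → fs k = 0 := fun _ hk hkp => hfs.eq_zero_of_lt hδ hk hkp
  exact ⟨vanish, neg_eq_iff_eq_neg.mp ((hfs.hasLeadingError hp vanish).unique hδ)⟩

end InverseModifiedSeries

theorem stmt0 {D : ℕ} (f δ : (Fin D → ℝ) → (Fin D → ℝ))
    (φ : ℝ → (Fin D → ℝ) → (Fin D → ℝ))
    (Φ : ℝ → ((Fin D → ℝ) → (Fin D → ℝ)) → ((Fin D → ℝ) → (Fin D → ℝ)))
    (p : ℕ) (hp : 1 ≤ p)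
    (fs : ℕ → (Fin D → ℝ) → (Fin D → ℝ))
    (hφ0 : ∀ x, φ 0 x = x)
    (hφ : ∀ t x, HasDerivAt (fun s => φ s x) (f (φ t x)) t)
    (hfs0 : fs 0 = f)
    (horder : ∀ x, (fun h : ℝ => Φ h f x - φ h x - h ^ (p + 1) • δ x)
      =o[𝓝 0] fun h : ℝ => h ^ (p + 1))
    (hrec : ∀ k : ℕ, 1 ≤ k → ∀ x,
      (fun h : ℝ => φ h x - Φ h (fun y => ∑ j ∈ Finset.range k, h ^ j • fs j y) x
          - h ^ (k + 1) • fs k x) =o[𝓝 0] fun h : ℝ => h ^ (k + 1)) :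
    (∀ k, 1 ≤ k → k ≤ p - 1 → ∀ x, fs k x = 0) ∧ (∀ x, fs p x = - δ x) := by
  subst hfs0
  obtain ⟨vanish, leading⟩ := stmt0_general hp horder hrec
  exact ⟨fun k hk hkp => congrFun (vanish k hk (by omega)), congrFun leading⟩
end

section
/- Let D ≥ 1, let ℂ^D carry the supremum (ℓ∞) norm, let x ∈ ℂ^D, let r, m > 0, and let f : ℂ^D → ℂ^D be holomorphic on the open ball B(x, r) with ‖f(z)‖ ≤ m for all z ∈ B(x, r). Let φ : ℂ → ℂ^D satisfy φ(0) = x and, for all complex t with |t| < r/(2m), φ(t) ∈ B(x, r) and φ′(t) = f(φ(t)). Define the inverse-modified-equation coefficients of the explicit Euler method at x by f_k := φ^{(k+1)}(0)/(k+1)! for k ≥ 0 (where φ^{(j)} denotes the j-th complex derivative of φ at 0). Let f_θ : ℂ^D → ℂ^D be any map, and for real h with 0 < h ≤ r/(8m) set the pointwise learning loss L := ‖(x + h·f_θ(x)) − φ(h)‖ / h and K := ⌊r/(4·e·m·h)⌋. Then ‖f_θ(x) − Σ_{k=0}^{K} h^k f_k‖ ≤ (4/3)·m·e^{−r/(4·e·m·h)}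 + L. -/
open Filter Topology Metric

/-!
The loss is the distance from `fθ x` to the difference quotient `(φ h - φ 0) / h` of the exact flow,
and the power series of this quotient in `h` is exactly the inverse modified equation
`∑ h ^ k f_k`. Since the derivative of `φ` is bounded by `m` on the disc of radius `R = r / (2m)`,
Cauchy's estimates give `‖f_k‖ ≤ m / R ^ k`, so truncating after the term of index `K` costs at most
the geometric tail `m q ^ (K + 1) / (1 - q)` with `q = h / R ≤ 1 / 4`. Now `1 / (1 - q) ≤ 4 / 3`,
and `q ≤ e⁻¹` makes `q ^ (K + 1)` exponentially small, because `K + 1` exceeds `r / (4 e m h)`.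
-/

theorem pow_floor_add_one_le_exp_neg {q : ℝ} (hq₀ : 0 ≤ q) (hq : q ≤ Real.exp (-1)) (y : ℝ) :
    q ^ (⌊y⌋₊ + 1) ≤ Real.exp (-y) :=
  calc q ^ (⌊y⌋₊ + 1) ≤ Real.exp (-1) ^ (⌊y⌋₊ + 1) := by gcongr
    _ = Real.exp (-(⌊y⌋₊ + 1)) := by rw [← Real.exp_nat_mul]; push_cast; ring_nf
    _ ≤ Real.exp (-y) := by gcongr; exact (Nat.lt_floor_add_one y).le

theorem one_fourth_le_exp_neg_one : (1 / 4 : ℝ) ≤ Real.exp (-1) := by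
  rw [Real.exp_neg, one_div]
  gcongr
  linarith [Real.exp_one_lt_three]

section BanachSpace

variable {E : Type*} [NormedAddCommGroup E] [NormedSpace ℂ E]

/-- The coefficient `f_k` of the inverse modified differential equation of the explicit Euler method
at the point `φ 0`, where `φ` is the exact flow line through that point: the Taylor coefficient of
`φ` at `0` of order `k + 1`. -/
noncomputable def eulerIMDECoeff (φ : ℂ → E) (k : ℕ) : E :=
  ((k + 1).factorial : ℂ)⁻¹ • iteratedDeriv (k + 1) φ 0

theorem norm_sub_slope_zero (φ : ℂ → E) (v : E) {z : ℂ} (hz : z ≠ 0) :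
    ‖v - slope φ 0 z‖ = ‖(φ 0 + z • v) - φ z‖ / ‖z‖ := by
  have euler_defect : (φ 0 + z • v) - φ z = z • (v - slope φ 0 z) := by
    have flow_increment : z • slope φ 0 z = φ z - φ 0 := by simpa using sub_smul_slope φ 0 z
    rw [smul_sub, flow_increment]
    abel
  rw [euler_defect, norm_smul, mul_div_cancel_left₀ _ (norm_ne_zero_iff.mpr hz)]

variable [CompleteSpace E]

theorem norm_iteratedDeriv_le_of_forall_mem_ball_norm_le {g : ℂ → E} {c : ℂ} {R C : ℝ}
    (hR : 0 < R) (hg : DifferentiableOn ℂ g (ball c R)) (hC : ∀ t ∈ ball c R, ‖g t‖ ≤ C) (n : ℕ) :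
    ‖iteratedDeriv n g c‖ ≤ n.factorial * C / R ^ n := by
  have cauchy_of_lt : ∀ᶠ S in 𝓝[<] R, ‖iteratedDeriv n g c‖ ≤ n.factorial * C / S ^ n := by
    filter_upwards [Ioo_mem_nhdsLT hR] with S ⟨hS₀, hSR⟩
    have closedBall_subset : closedBall c S ⊆ ball c R := closedBall_subset_ball hSR
    refine Complex.norm_iteratedDeriv_le_of_forall_mem_sphere_norm_le n hS₀ ?_ fun t ht =>
      hC t (closedBall_subset (sphere_subset_closedBall ht))
    exact hg.diffContOnCl_ball closedBall_subset
  have tendsto_bound :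
      Tendsto (fun S : ℝ => n.factorial * C / S ^ n) (𝓝[<] R) (𝓝 (n.factorial * C / R ^ n)) :=
    (tendsto_const_nhds.div (tendsto_id.pow n) (pow_ne_zero n hR.ne')).mono_left nhdsWithin_le_nhds
  exact ge_of_tendsto tendsto_bound cauchy_of_lt

variable {φ : ℂ → E} {R m : ℝ}

theorem norm_eulerIMDECoeff_le (hR : 0 < R) (hφ : DifferentiableOn ℂ φ (ball 0 R))
    (hm : ∀ t ∈ ball (0 : ℂ) R, ‖deriv φ t‖ ≤ m) (k : ℕ) :
    ‖eulerIMDECoeff φ k‖ ≤ m / R ^ k := by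
  have cauchy : ‖iteratedDeriv (k + 1) φ 0‖ ≤ k.factorial * m / R ^ k := by
    rw [iteratedDeriv_succ']
    exact norm_iteratedDeriv_le_of_forall_mem_ball_norm_le hR (hφ.deriv isOpen_ball) hm k
  rw [eulerIMDECoeff, norm_smul, norm_inv, Complex.norm_natCast]
  calc ((k + 1).factorial : ℝ)⁻¹ * ‖iteratedDeriv (k + 1) φ 0‖
      ≤ (k.factorial : ℝ)⁻¹ * (k.factorial * m / R ^ k) := by
        gcongr
        exact k.le_succ
    _ = m / R ^ k := by field_simp

theorem hasSum_eulerIMDECoeff_slope (hφ : DifferentiableOn ℂ φ (ball 0 R)) {z : ℂ} (hz₀ : z ≠ 0)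
    (hz : ‖z‖ < R) :
    HasSum (fun k => z ^ k • eulerIMDECoeff φ k) (slope φ 0 z) := by
  have taylor := Complex.hasSum_taylorSeries_on_ball hφ (mem_ball_zero_iff.mpr hz)
  have taylor_tail := ((hasSum_nat_add_iff' 1).mpr taylor).const_smul z⁻¹
  simp only [Finset.range_one, Finset.sum_singleton, Nat.factorial_zero, Nat.cast_one, inv_one,
    pow_zero, iteratedDeriv_zero, one_smul, sub_zero] at taylor_tail
  rw [slope_def_module, sub_zero]
  convert taylor_tail using 2 with k
  rw [eulerIMDECoeff, smul_comm _ (z ^ (k + 1)), smul_smul z⁻¹, pow_succ', inv_mul_cancel_left₀ hz₀]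

theorem norm_slope_sub_sum_eulerIMDECoeff_le (hφ : DifferentiableOn ℂ φ (ball 0 R))
    (hm : ∀ t ∈ ball (0 : ℂ) R, ‖deriv φ t‖ ≤ m) {z : ℂ} (hz₀ : z ≠ 0) (hz : ‖z‖ < R) (N : ℕ) :
    ‖slope φ 0 z - ∑ k ∈ Finset.range N, z ^ k • eulerIMDECoeff φ k‖
      ≤ m * (‖z‖ / R) ^ N / (1 - ‖z‖ / R) := by
  have hR : 0 < R := (norm_nonneg z).trans_lt hz
  have term_le (k : ℕ) : ‖z ^ k • eulerIMDECoeff φ k‖ ≤ m * (‖z‖ / R) ^ k :=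
    calc ‖z ^ k • eulerIMDECoeff φ k‖ = ‖z‖ ^ k * ‖eulerIMDECoeff φ k‖ := by
          rw [norm_smul, norm_pow]
      _ ≤ ‖z‖ ^ k * (m / R ^ k) := by gcongr; exact norm_eulerIMDECoeff_le hR hφ hm k
      _ = m * (‖z‖ / R) ^ k := by rw [div_pow]; ring
  rw [norm_sub_rev]
  exact norm_sub_le_of_geometric_bound_of_hasSum ((div_lt_one hR).mpr hz) term_le
    (hasSum_eulerIMDECoeff_slope hφ hz₀ hz) N

theorem norm_slope_sub_sum_eulerIMDECoeff_le_exp (hφ : DifferentiableOn ℂ φ (ball 0 R))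
    (hm : ∀ t ∈ ball (0 : ℂ) R, ‖deriv φ t‖ ≤ m) {z : ℂ} (hz₀ : z ≠ 0) (hz : ‖z‖ ≤ R / 4) (y : ℝ) :
    ‖slope φ 0 z - ∑ k ∈ Finset.range (⌊y⌋₊ + 1), z ^ k • eulerIMDECoeff φ k‖
      ≤ 4 / 3 * m * Real.exp (-y) := by
  have norm_z_pos : 0 < ‖z‖ := norm_pos_iff.mpr hz₀
  have hR : 0 < R := by linarith
  have m_nonneg : 0 ≤ m := (norm_nonneg _).trans (hm 0 (mem_ball_self hR))
  have ratio_le : ‖z‖ / R ≤ 1 / 4 := by rw [div_le_iff₀ hR]; linarith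
  have tail_le : (‖z‖ / R) ^ (⌊y⌋₊ + 1) ≤ Real.exp (-y) :=
    pow_floor_add_one_le_exp_neg (by positivity) (ratio_le.trans one_fourth_le_exp_neg_one) y
  calc _ ≤ m * (‖z‖ / R) ^ (⌊y⌋₊ + 1) / (1 - ‖z‖ / R) :=
        norm_slope_sub_sum_eulerIMDECoeff_le hφ hm hz₀ (by linarith) _
    _ ≤ m * Real.exp (-y) / (1 - 1 / 4) := by gcongr
    _ = 4 / 3 * m * Real.exp (-y) := by ring

theorem stmt1_general (x : E) (r m : ℝ) (f : E → E)
    (hfb : ∀ z ∈ ball x r, ‖f z‖ ≤ m)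
    (φ : ℂ → E) (hφ0 : φ 0 = x)
    (hφ : ∀ t : ℂ, ‖t‖ < r / (2 * m) → φ t ∈ ball x r ∧ HasDerivAt φ (f (φ t)) t)
    (fθ : E → E) (h : ℝ) (hh : 0 < h) (hh' : h ≤ r / (8 * m)) :
    ‖fθ x - ∑ k ∈ Finset.range (⌊r / (4 * Real.exp 1 * m * h)⌋₊ + 1), h ^ k • eulerIMDECoeff φ k‖
      ≤ (4 / 3) * m * Real.exp (-r / (4 * Real.exp 1 * m * h))
        + ‖(x + h • fθ x) - φ (h : ℂ)‖ / h := by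
  have hφ_ball (t : ℂ) (ht : t ∈ ball 0 (r / (2 * m))) := hφ t (mem_ball_zero_iff.mp ht)
  have norm_h : ‖(h : ℂ)‖ = h := Complex.norm_of_nonneg hh.le
  have h_ne : (h : ℂ) ≠ 0 := Complex.ofReal_ne_zero.mpr hh.ne'
  have truncation := norm_slope_sub_sum_eulerIMDECoeff_le_exp
    (fun t ht => (hφ_ball t ht).2.differentiableAt.differentiableWithinAt)
    (fun t ht => (hφ_ball t ht).2.deriv ▸ hfb _ (hφ_ball t ht).1) h_ne
    (norm_h.trans_le (hh'.trans_eq (by ring))) (r / (4 * Real.exp 1 * m * h))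
  have loss := norm_sub_slope_zero φ (fθ x) h_ne
  simp only [norm_h, hφ0, ← Complex.ofReal_pow, Complex.coe_smul] at truncation loss
  rw [neg_div, ← loss]
  exact (norm_sub_le_norm_sub_add_norm_sub _ (slope φ 0 h) _).trans <| by linarith

end BanachSpace

theorem stmt1 {D : ℕ} (hD : 1 ≤ D) (x : Fin D → ℂ) (r m : ℝ) (hr : 0 < r) (hm : 0 < m)
    (f : (Fin D → ℂ) → (Fin D → ℂ))
    (hf : DifferentiableOn ℂ f (ball x r))
    (hfb : ∀ z ∈ ball x r, ‖f z‖ ≤ m)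
    (φ : ℂ → Fin D → ℂ) (hφ0 : φ 0 = x)
    (hφ : ∀ t : ℂ, ‖t‖ < r / (2 * m) → φ t ∈ ball x r ∧ HasDerivAt φ (f (φ t)) t)
    (fθ : (Fin D → ℂ) → (Fin D → ℂ))
    (h : ℝ) (hh : 0 < h) (hh' : h ≤ r / (8 * m)) :
    ‖fθ x - ∑ k ∈ Finset.range (⌊r / (4 * Real.exp 1 * m * h)⌋₊ + 1),
        (h : ℝ) ^ k • (((Nat.factorial (k + 1) : ℂ))⁻¹ • iteratedDeriv (k + 1) φ 0)‖
      ≤ (4 / 3) * m * Real.exp (-r / (4 * Real.exp 1 * m * h))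
        + ‖(x + h • fθ x) - φ (h : ℂ)‖ / h :=
  stmt1_general x r m f hfb φ hφ0 hφ fθ h hh hh'
end

section
/- Let D ≥ 1, let ℂ^D carry the supremum (ℓ∞) norm, let x ∈ ℂ^D, let r, m > 0, and let f : ℂ^D → ℂ^D be holomorphic on the open ball B(x, r) with ‖f(z)‖ ≤ m for all z ∈ B(x, r). Let φ : ℂ → ℂ^D satisfy φ(0) = x and, for all complex t with |t| < r/(2m), φ(t) ∈ B(x, r) and φ′(t) = f(φ(t)). Let f_θ : ℂ^D → ℂ^D be any map, and for real h with 0 < h ≤ r/(4m) set L := ‖(x + h·f_θ(x)) − φ(h)‖ / h. Then ‖f_θ(x) − f(x)‖ ≤ (m²/r)·h + L. -/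
open Filter Topology Metric

/-!
By the Schwarz lemma, `f` deviates from its central value `f x` on the ball `B(x, r)` at rate at
most `2m / r`. A trajectory starting at `x` has speed at most `m`, so its velocity at time `t`
differs from `f x` by at most `(2m / r) * (m * t)`. Integrating over `[0, h]`, one Euler step with
the true field misses the flow by at most `(m² / r) * h²`. Two Euler steps from the same point
differ by `h` times the difference of the fields there, so comparing both with the flow and
dividing by `h` gives the bound.
-/

/-- One step of the explicit Euler method with step size `h` for the autonomous vector field `g`. -/
def eulerStep {E : Type*} [AddCommGroup E] [Module ℝ E] (g : E → E) (h : ℝ) (x : E) : E :=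
  x + h • g x

section Real

variable {E : Type*} [NormedAddCommGroup E] [NormedSpace ℝ E]

theorem norm_sub_sub_smul_le_of_norm_deriv_right_sub_le {γ γ' : ℝ → E} {v : E} {a b C : ℝ}
    (hab : a ≤ b) (hγ : ContinuousOn γ (Set.Icc a b))
    (hγ' : ∀ t ∈ Set.Ico a b, HasDerivWithinAt γ (γ' t) (Set.Ici t) t)
    (bound : ∀ t ∈ Set.Ico a b, ‖γ' t - v‖ ≤ C * (t - a)) :
    ‖γ b - γ a - (b - a) • v‖ ≤ C / 2 * (b - a) ^ 2 := by
  refine image_norm_le_of_norm_deriv_right_le_deriv_boundary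
    (f := fun t ↦ γ t - γ a - (t - a) • v) (f' := fun t ↦ γ' t - v)
    (B := fun t ↦ C / 2 * (t - a) ^ 2) (B' := fun t ↦ C * (t - a))
    (by fun_prop) (fun t ht ↦ ?_) (by simp) (fun t ↦ ?_) bound (Set.right_mem_Icc.2 hab)
  · have hline : HasDerivWithinAt (fun s ↦ (s - a) • v) v (Set.Ici t) t := by
      simpa using ((hasDerivWithinAt_id t _).sub_const a).smul_const v
    exact ((hγ' t ht).sub_const _).sub hline
  · convert! (((hasDerivAt_id t).sub_const a).pow 2).const_mul (C / 2) using 1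
    simp only [id]
    ring

theorem norm_sub_eulerStep_le {f : E → E} {γ : ℝ → E} {a b m K : ℝ} (hab : a ≤ b) (hK : 0 ≤ K)
    (hγ : IsIntegralCurveOn γ (fun _ ↦ f) (Set.Icc a b))
    (hspeed : ∀ t ∈ Set.Ico a b, ‖f (γ t)‖ ≤ m)
    (hlip : ∀ t ∈ Set.Ico a b, ‖f (γ t) - f (γ a)‖ ≤ K * ‖γ t - γ a‖) :
    ‖γ b - eulerStep f (b - a) (γ a)‖ ≤ K * m / 2 * (b - a) ^ 2 := by
  have hcont : ContinuousOn γ (Set.Icc a b) := fun t ht ↦ (hγ t ht).continuousWithinAt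
  have hright : ∀ t ∈ Set.Ico a b, HasDerivWithinAt γ (f (γ t)) (Set.Ici t) t := fun t ht ↦
    (hγ t (Set.Ico_subset_Icc_self ht)).mono_of_mem_nhdsWithin (Icc_mem_nhdsGE_of_mem ht)
  have hdist : ∀ t ∈ Set.Icc a b, ‖γ t - γ a‖ ≤ m * (t - a) :=
    norm_image_sub_le_of_norm_deriv_right_le_segment hcont hright hspeed
  rw [eulerStep, ← sub_sub]
  refine norm_sub_sub_smul_le_of_norm_deriv_right_sub_le hab hcont hright fun t ht ↦ ?_
  calc ‖f (γ t) - f (γ a)‖ ≤ K * ‖γ t - γ a‖ := hlip t ht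
    _ ≤ K * (m * (t - a)) := by gcongr; exact hdist t (Set.Ico_subset_Icc_self ht)
    _ = K * m * (t - a) := by ring

theorem norm_sub_le_norm_sub_eulerStep_div_add (f g : E → E) (x y : E) {h : ℝ} (hh : 0 < h) :
    ‖g x - f x‖ ≤ ‖y - eulerStep f h x‖ / h + ‖eulerStep g h x - y‖ / h := by
  rw [← add_div, le_div_iff₀ hh]
  calc ‖g x - f x‖ * h = ‖h • (g x - f x)‖ := by
        rw [norm_smul, Real.norm_of_nonneg hh.le, mul_comm]
    _ = ‖(y - eulerStep f h x) + (eulerStep g h x - y)‖ := by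
        simp only [eulerStep, smul_sub]; congr 1; abel
    _ ≤ _ := norm_add_le _ _

end Real

section Complex

variable {E F : Type*} [NormedAddCommGroup E] [NormedSpace ℂ E]
  [NormedAddCommGroup F] [NormedSpace ℂ F]

theorem norm_sub_center_le_of_differentiableOn_ball {f : E → F} {x z : E} {r m : ℝ}
    (hf : DifferentiableOn ℂ f (ball x r)) (hfb : ∀ w ∈ ball x r, ‖f w‖ ≤ m)
    (hz : z ∈ ball x r) : ‖f z - f x‖ ≤ 2 * m / r * ‖z - x‖ := by
  have hx : x ∈ ball x r := mem_ball_self (pos_of_mem_ball hz)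
  have hmaps : Set.MapsTo f (ball x r) (closedBall (f x) (2 * m)) := fun w hw ↦ by
    rw [mem_closedBall, dist_eq_norm]
    linarith [norm_sub_le (f w) (f x), hfb w hw, hfb x hx]
  simpa only [dist_eq_norm] using Complex.dist_le_div_mul_dist_of_mapsTo_ball hf hmaps hz

theorem isIntegralCurveOn_comp_ofReal {v : ℝ → E → E} {φ : ℂ → E} {s : Set ℝ}
    (hφ : ∀ t ∈ s, HasDerivAt φ (v t (φ t)) t) :
    IsIntegralCurveOn (fun t : ℝ ↦ φ t) v s := fun t ht ↦ by
  have hcomp := (hφ t ht).scomp t Complex.ofRealCLM.hasDerivAt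
  simpa [Function.comp_def] using hcomp.hasDerivWithinAt

theorem stmt2_general {x : E} {r m h : ℝ} {f : E → E} (hf : DifferentiableOn ℂ f (ball x r))
    (hfb : ∀ z ∈ ball x r, ‖f z‖ ≤ m) {φ : ℝ → E} (hφ0 : φ 0 = x)
    (hmem : ∀ t ∈ Set.Ico 0 h, φ t ∈ ball x r)
    (hφ : IsIntegralCurveOn φ (fun _ ↦ f) (Set.Icc 0 h)) (fθ : E → E) (hh : 0 < h) :
    ‖fθ x - f x‖ ≤ m ^ 2 / r * h + ‖eulerStep fθ h x - φ h‖ / h := by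
  have hx : x ∈ ball x r := hφ0 ▸ hmem 0 (Set.left_mem_Ico.2 hh)
  have hr : 0 < r := pos_of_mem_ball hx
  have hm : 0 ≤ m := (norm_nonneg _).trans (hfb x hx)
  have htrunc : ‖φ h - eulerStep f h x‖ ≤ m ^ 2 / r * h * h := by
    have := norm_sub_eulerStep_le (K := 2 * m / r) hh.le (by positivity) hφ
      (fun t ht ↦ hfb _ (hmem t ht))
      (fun t ht ↦ hφ0 ▸ norm_sub_center_le_of_differentiableOn_ball hf hfb (hmem t ht))
    rw [sub_zero, hφ0] at this
    exact this.trans_eq (by ring)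
  calc ‖fθ x - f x‖ ≤ ‖φ h - eulerStep f h x‖ / h + ‖eulerStep fθ h x - φ h‖ / h :=
        norm_sub_le_norm_sub_eulerStep_div_add f fθ x (φ h) hh
    _ ≤ m ^ 2 / r * h + ‖eulerStep fθ h x - φ h‖ / h := by
        gcongr; exact (div_le_iff₀ hh).2 htrunc

end Complex

theorem stmt2 {D : ℕ} (hD : 1 ≤ D) (x : Fin D → ℂ) (r m : ℝ) (hr : 0 < r) (hm : 0 < m)
    (f : (Fin D → ℂ) → (Fin D → ℂ))
    (hf : DifferentiableOn ℂ f (ball x r))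
    (hfb : ∀ z ∈ ball x r, ‖f z‖ ≤ m)
    (φ : ℂ → Fin D → ℂ) (hφ0 : φ 0 = x)
    (hφ : ∀ t : ℂ, ‖t‖ < r / (2 * m) → φ t ∈ ball x r ∧ HasDerivAt φ (f (φ t)) t)
    (fθ : (Fin D → ℂ) → (Fin D → ℂ))
    (h : ℝ) (hh : 0 < h) (hh' : h ≤ r / (4 * m)) :
    ‖fθ x - f x‖ ≤ (m ^ 2 / r) * h + ‖(x + h • fθ x) - φ (h : ℂ)‖ / h := by
  have htime : ∀ t ∈ Set.Icc 0 h, ‖(t : ℂ)‖ < r / (2 * m) := fun t ht ↦ by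
    rw [Complex.norm_of_nonneg ht.1]
    exact (ht.2.trans hh').trans_lt (by gcongr; norm_num)
  exact stmt2_general hf hfb (φ := fun t : ℝ ↦ φ t) (by simpa using hφ0)
    (fun t ht ↦ (hφ t (htime t (Set.Ico_subset_Icc_self ht))).1)
    (isIntegralCurveOn_comp_ofReal fun t ht ↦ (hφ t (htime t ht)).2) fθ hh
end

section
/- Let n ≥ 1 and let J be the standard 2n×2n real symplectic structure matrix (in block form, J = [[0, I_n], [−I_n, 0]]). Let K be a natural number, let M, N : ℝ → Mat_{2n}(ℝ) be families of matrices, and let A ∈ Mat_{2n}(ℝ). Assume: (i) M(h)ᵀ · J · M(h) = J for all h; (ii) N(h)ᵀ · J · N(h) = J for all h; (iii) h^{−(K+2)}·(M(h) − N(h)) → A as h → 0 (h ≠ 0); (iv) N(h) → I (the identity matrix) as h → 0. Then Aᵀ · J + J · A = 0. -/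
open Filter Topology Matrix

/-!
Since `Xᵀ J X` takes the same value at `X = M` and `X = N`, subtracting gives the exact identity
`(M - N)ᵀ J M + Nᵀ J (M - N) = 0`. If `ε⁻¹ (M - N) → A` for a rate `ε → 0` and `N → P`, then also
`M → P`, so multiplying the identity by `ε⁻¹` and passing to the limit yields
`Aᵀ J P + Pᵀ J A = 0`.
-/

theorem tendsto_pow_nhdsNE_zero {R : Type*} [MonoidWithZero R] [NoZeroDivisors R]
    [TopologicalSpace R] [ContinuousMul R] {k : ℕ} (hk : k ≠ 0) :
    Tendsto (fun x : R ↦ x ^ k) (𝓝[≠] 0) (𝓝[≠] 0) := by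
  have hcont : ContinuousWithinAt (fun x : R ↦ x ^ k) {0}ᶜ 0 := by fun_prop
  simpa only [zero_pow hk] using
    hcont.tendsto_nhdsWithin (t := {0}ᶜ) fun x hx ↦ pow_ne_zero k hx

theorem tendsto_of_tendsto_inv_smul_sub {α 𝕜 E : Type*} [DivisionRing 𝕜] [TopologicalSpace 𝕜]
    [AddCommGroup E] [Module 𝕜 E] [TopologicalSpace E] [ContinuousAdd E] [ContinuousSMul 𝕜 E]
    {l : Filter α} {ε : α → 𝕜} {f g : α → E} {a b : E} (hε : Tendsto ε l (𝓝[≠] 0))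
    (hfg : Tendsto (fun x ↦ (ε x)⁻¹ • (f x - g x)) l (𝓝 a)) (hg : Tendsto g l (𝓝 b)) :
    Tendsto f l (𝓝 b) := by
  obtain ⟨hε_zero, hε_ne⟩ := tendsto_nhdsWithin_iff.mp hε
  have hlim : Tendsto (fun x ↦ ε x • (ε x)⁻¹ • (f x - g x) + g x) l (𝓝 b) := by
    simpa only [zero_smul, zero_add] using (hε_zero.smul hfg).add hg
  refine hlim.congr' ?_
  filter_upwards [hε_ne] with x hx
  rw [smul_inv_smul₀ hx, sub_add_cancel]

theorem transpose_mul_mul_sub_transpose_mul_mul {m n R : Type*} [Fintype m]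
    [NonUnitalNonAssocRing R] (J : Matrix m m R) (X Y : Matrix m n R) :
    Xᵀ * J * X - Yᵀ * J * Y = (X - Y)ᵀ * J * X + Yᵀ * J * (X - Y) := by
  rw [transpose_sub, Matrix.sub_mul, Matrix.sub_mul, Matrix.mul_sub, sub_add_sub_cancel]

theorem tendsto_smul_transpose_mul_mul_sub {m n R α : Type*} [Fintype m] [CommRing R]
    [TopologicalSpace R] [IsTopologicalSemiring R] {l : Filter α} {c : α → R}
    {M N : α → Matrix m n R} {A P Q : Matrix m n R} (J : Matrix m m R)
    (hMN : Tendsto (fun x ↦ c x • (M x - N x)) l (𝓝 A))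
    (hM : Tendsto M l (𝓝 P)) (hN : Tendsto N l (𝓝 Q)) :
    Tendsto (fun x ↦ c x • ((M x)ᵀ * J * M x - (N x)ᵀ * J * N x)) l
      (𝓝 (Aᵀ * J * P + Qᵀ * J * A)) := by
  have hcont : Continuous fun X : Matrix m n R × Matrix m n R × Matrix m n R ↦
      X.1ᵀ * J * X.2.1 + X.2.2ᵀ * J * X.1 := by fun_prop
  refine (hcont.tendsto (A, P, Q)).comp (hMN.prodMk_nhds (hM.prodMk_nhds hN)) |>.congr fun x ↦ ?_
  simp only [Function.comp_apply, transpose_mul_mul_sub_transpose_mul_mul, transpose_smul,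
    Matrix.smul_mul, Matrix.mul_smul, smul_add]

theorem stmt5_general {m n 𝕜 α : Type*} [Fintype m] [Field 𝕜] [TopologicalSpace 𝕜]
    [IsTopologicalSemiring 𝕜] [T2Space 𝕜] {l : Filter α} [l.NeBot] {ε : α → 𝕜}
    {M N : α → Matrix m n 𝕜} {A P : Matrix m n 𝕜} {J : Matrix m m 𝕜}
    (hε : Tendsto ε l (𝓝[≠] 0))
    (hcongr : ∀ᶠ x in l, (M x)ᵀ * J * M x = (N x)ᵀ * J * N x)
    (hMN : Tendsto (fun x ↦ (ε x)⁻¹ • (M x - N x)) l (𝓝 A)) (hN : Tendsto N l (𝓝 P)) :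
    Aᵀ * J * P + Pᵀ * J * A = 0 := by
  have hM : Tendsto M l (𝓝 P) := tendsto_of_tendsto_inv_smul_sub hε hMN hN
  have hquot := tendsto_smul_transpose_mul_mul_sub J hMN hM hN
  refine tendsto_nhds_unique hquot (tendsto_const_nhds.congr' ?_)
  filter_upwards [hcongr] with x hx
  rw [hx, sub_self, smul_zero]

theorem stmt5 {n : ℕ} (hn : 1 ≤ n) (K : ℕ)
    (M N : ℝ → Matrix (Fin n ⊕ Fin n) (Fin n ⊕ Fin n) ℝ)
    (A J : Matrix (Fin n ⊕ Fin n) (Fin n ⊕ Fin n) ℝ)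
    (hJ : J = Matrix.fromBlocks 0 1 (-1) 0)
    (hM : ∀ h : ℝ, (M h)ᵀ * J * M h = J)
    (hN : ∀ h : ℝ, (N h)ᵀ * J * N h = J)
    (hMN : Tendsto (fun h : ℝ => (h ^ (K + 2))⁻¹ • (M h - N h)) (𝓝[≠] 0) (𝓝 A))
    (hNI : Tendsto N (𝓝 0) (𝓝 1)) :
    Aᵀ * J + J * A = 0 := by
  simpa only [transpose_one, Matrix.mul_one, Matrix.one_mul] using
    stmt5_general (tendsto_pow_nhdsNE_zero (K + 1).succ_ne_zero)
      (.of_forall fun h ↦ (hM h).trans (hN h).symm) hMN (hNI.mono_left nhdsWithin_le_nhds)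
end

section
/- Let E = ℝ^D, let S ≥ 1 and k ≥ 0 be integers, let x ∈ E, ρ > 0 and c ≥ 0. Let φ : ℝ → E → E satisfy φ(0, y) = y and φ(s + t, y) = φ(s, φ(t, y)) for all s, t ∈ ℝ and y ∈ E, with t ↦ φ(t, x) continuous at t = 0. Let g : E → E be continuous on the closed ball of radius ρ around x, and let Ψ : ℝ → E → E satisfy the near-identity Lipschitz condition ‖(Ψ_h(y) − Ψ_h(z)) − (y − z)‖ ≤ c·|h|·‖y − z‖ for all h ∈ ℝ and y, z ∈ E. Suppose there is a function ε : ℝ → ℝ with ε(h) = o(h^{k+1}) as h → 0 such that ‖φ(h, y) − Ψ_h(y) − h^{k+1}·g(y)‖ ≤ ε(h) for all h ∈ ℝ and all y in the closed ball of radius ρ around x. Then φ(S·h, x) − Ψ_h^{∘S}(x) − S·h^{k+1}·g(x) = o(h^{k+1}) as h → 0, where Ψ_h^{∘S} denotes the S-fold composition of Ψ_h with itself. -/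
open Filter Topology Asymptotics

/-!
Put `y n = φ (n h) x`, `z n = Ψ_h^[n] x` and `v = g x`. By the group law `y n` is an iterate of the
time-`h` flow map, so the error after `n + 1` steps splits as

  `y (n + 1) - z (n + 1) = (φ_h (y n) - Ψ_h (y n)) + (Ψ_h (y n) - Ψ_h (z n))`.

Since `y n → x` as `h → 0`, the first bracket is a fresh local error `h ^ (k + 1) • v` up to
`o(h ^ (k + 1))`. Since `Ψ_h` is close to the identity on differences, the second bracket reproduces
the old error `y n - z n = O(h ^ (k + 1))` up to `o(h ^ (k + 1))`. Hence every step adds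
`h ^ (k + 1) • v`.
-/

section NearIdentity

variable {α E : Type*} [SeminormedAddCommGroup E] {l : Filter α} {Ψ : α → E → E} {x : E}

/-- The family of maps `Ψ h` is near the identity at `x` along the filter `l` on the parameter `h`:
`Ψ h - id` is Lipschitz near `x`, with a constant that can be made arbitrarily small. This is strict
differentiability at `x` with derivative the identity, uniformly in `h` along `l`, and is the
stability property under which one step of a method propagates errors unchanged to leading
order. -/
def IsNearIdentityAt (l : Filter α) (Ψ : α → E → E) (x : E) : Prop :=
  (fun p : α × E × E => (Ψ p.1 p.2.1 - Ψ p.1 p.2.2) - (p.2.1 - p.2.2))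
    =o[l ×ˢ 𝓝 x ×ˢ 𝓝 x] fun p => p.2.1 - p.2.2

theorem isNearIdentityAt_of_norm_le {κ : α → ℝ} (hκ : Tendsto κ l (𝓝 0))
    (hΨ : ∀ᶠ p : α × E × E in l ×ˢ 𝓝 x ×ˢ 𝓝 x,
      ‖(Ψ p.1 p.2.1 - Ψ p.1 p.2.2) - (p.2.1 - p.2.2)‖ ≤ κ p.1 * ‖p.2.1 - p.2.2‖) :
    IsNearIdentityAt l Ψ x := by
  refine IsLittleO.of_bound fun C hC => ?_
  have hκC : ∀ᶠ p : α × E × E in l ×ˢ 𝓝 x ×ˢ 𝓝 x, κ p.1 ≤ C :=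
    tendsto_fst.eventually (hκ.eventually_le_const hC)
  filter_upwards [hΨ, hκC] with p hp hpC
  exact hp.trans (by gcongr)

theorem IsNearIdentityAt.isLittleO_map_sub_map {F : Type*} [SeminormedAddCommGroup F]
    {η : α → F} {y z : α → E}
    (hΨ : IsNearIdentityAt l Ψ x) (hy : Tendsto y l (𝓝 x)) (hz : Tendsto z l (𝓝 x))
    (hyz : (fun h => y h - z h) =O[l] η) :
    (fun h => (Ψ h (y h) - Ψ h (z h)) - (y h - z h)) =o[l] η :=
  (hΨ.comp_tendsto (tendsto_id.prodMk (hy.prodMk hz))).trans_isBigO hyz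

end NearIdentity

theorem isLittleO_prod_nhds_of_norm_le {α X F G : Type*} [TopologicalSpace X]
    [SeminormedAddCommGroup F] [SeminormedAddCommGroup G] {l : Filter α} {x : X} {s : Set X}
    {f : α → X → F} {ε : α → ℝ} {η : α → G} (hs : s ∈ 𝓝 x) (hε : ε =o[l] η)
    (hf : ∀ᶠ h in l, ∀ y ∈ s, ‖f h y‖ ≤ ε h) :
    (fun p : α × X => f p.1 p.2) =o[l ×ˢ 𝓝 x] fun p => η p.1 := by
  have hbound : ∀ᶠ p : α × X in l ×ˢ 𝓝 x, ‖f p.1 p.2‖ ≤ ε p.1 :=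
    (hf.prod_mk hs).mono fun p hp => hp.1 p.2 hp.2
  exact (IsBigO.of_norm_eventuallyLE hbound).trans_isLittleO (hε.comp_tendsto tendsto_fst)

section ErrorAccumulation

variable {α 𝕜 E : Type*} [NormedField 𝕜] [SeminormedAddCommGroup E] [NormedSpace 𝕜 E]
  {l : Filter α} {η : α → 𝕜}

theorem isLittleO_sub_smul_const_of_continuousAt {X : Type*} [TopologicalSpace X]
    {x : X} {f : α × X → E} {g : X → E} (hg : ContinuousAt g x)
    (hf : (fun p => f p - η p.1 • g p.2) =o[l ×ˢ 𝓝 x] fun p => η p.1) :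
    (fun p => f p - η p.1 • g x) =o[l ×ˢ 𝓝 x] fun p => η p.1 := by
  have hg_sub : (fun p : α × X => g p.2 - g x) =o[l ×ˢ 𝓝 x] fun _ => (1 : 𝕜) := by
    rw [isLittleO_one_iff, ← sub_self (g x)]
    exact (hg.tendsto.comp tendsto_snd).sub_const (g x)
  have hη_smul : (fun p : α × X => η p.1 • (g p.2 - g x)) =o[l ×ˢ 𝓝 x] fun p => η p.1 := by
    simpa only [smul_eq_mul, mul_one] using
      (isBigO_refl (fun p : α × X => η p.1) _).smul_isLittleO hg_sub
  exact (hf.add hη_smul).congr_left fun p => by module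

theorem isBigO_of_isLittleO_sub_const_mul_smul {e : α → E} {a : 𝕜} {v : E}
    (he : (fun h => e h - (a * η h) • v) =o[l] η) : e =O[l] η := by
  have hsmul : (fun h => (a * η h) • v) =O[l] η := by
    simpa only [smul_eq_mul, mul_one] using
      ((isBigO_refl η l).const_mul_left a).smul (isBigO_const_const v (one_ne_zero' 𝕜) l)
  exact (he.isBigO.add hsmul).congr_left fun h => sub_add_cancel _ _

theorem IsNearIdentityAt.isLittleO_iterate_sub_iterate {Φ Ψ : α → E → E} {v x : E}
    (hΨ : IsNearIdentityAt l Ψ x) (hη : Tendsto η l (𝓝 0))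
    (hΦ : ∀ n : ℕ, Tendsto (fun h => (Φ h)^[n] x) l (𝓝 x))
    (hloc : (fun p : α × E => Φ p.1 p.2 - Ψ p.1 p.2 - η p.1 • v) =o[l ×ˢ 𝓝 x] fun p => η p.1)
    (n : ℕ) :
    (fun h => (Φ h)^[n] x - (Ψ h)^[n] x - ((n : 𝕜) * η h) • v) =o[l] η := by
  induction n with
  | zero => simpa using isLittleO_zero η l
  | succ n ih =>
    have error_isBigO : (fun h => (Φ h)^[n] x - (Ψ h)^[n] x) =O[l] η :=
      isBigO_of_isLittleO_sub_const_mul_smul ih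
    have error_tendsto : Tendsto (fun h => (Φ h)^[n] x - (Ψ h)^[n] x) l (𝓝 0) :=
      (isLittleO_one_iff 𝕜).1 (error_isBigO.trans_isLittleO ((isLittleO_one_iff 𝕜).2 hη))
    have tendsto_iterate : Tendsto (fun h => (Ψ h)^[n] x) l (𝓝 x) := by
      simpa using (hΦ n).sub error_tendsto
    have fresh_error : (fun h => Φ h ((Φ h)^[n] x) - Ψ h ((Φ h)^[n] x) - η h • v) =o[l] η :=
      hloc.comp_tendsto (tendsto_id.prodMk (hΦ n))
    have propagated_error : (fun h => (Ψ h ((Φ h)^[n] x) - Ψ h ((Ψ h)^[n] x))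
        - ((Φ h)^[n] x - (Ψ h)^[n] x)) =o[l] η :=
      hΨ.isLittleO_map_sub_map (hΦ n) tendsto_iterate error_isBigO
    refine ((fresh_error.add propagated_error).add ih).congr_left fun h => ?_
    simp only [Function.iterate_succ_apply', Nat.cast_succ]
    module

end ErrorAccumulation

theorem iterate_eq_apply_natCast_mul {R X : Type*} [NonAssocSemiring R] {φ : R → X → X} {x : X}
    (hφ0 : φ 0 x = x) (hφadd : ∀ s t, φ (s + t) x = φ s (φ t x)) (h : R) (n : ℕ) :
    (φ h)^[n] x = φ (n * h) x := by
  induction n with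
  | zero => simp [hφ0]
  | succ n ih =>
    rw [Function.iterate_succ_apply', ih, ← hφadd, Nat.cast_succ, add_one_mul, add_comm]

theorem tendsto_apply_natCast_mul_of_continuousAt {R X : Type*} [NonAssocSemiring R]
    [TopologicalSpace R] [ContinuousMul R] [TopologicalSpace X] {φ : R → X → X} {x : X}
    (hφ0 : φ 0 x = x) (hφcont : ContinuousAt (fun t => φ t x) 0) (n : ℕ) :
    Tendsto (fun h : R => φ (n * h) x) (𝓝 0) (𝓝 x) := by
  have hmul : Tendsto (fun h : R => (n : R) * h) (𝓝 0) (𝓝 0) := by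
    simpa using (continuous_const_mul (n : R)).tendsto 0
  simpa only [hφ0, Function.comp_def] using hφcont.tendsto.comp hmul

theorem stmt7_general {𝕜 E : Type*} [NormedField 𝕜] [SeminormedAddCommGroup E] [NormedSpace 𝕜 E]
    {φ Ψ : 𝕜 → E → E} {g : E → E} {x : E} {k : ℕ}
    (hφ0 : φ 0 x = x) (hφadd : ∀ s t, φ (s + t) x = φ s (φ t x))
    (hφcont : ContinuousAt (fun t => φ t x) 0) (hg : ContinuousAt g x)
    (hΨ : IsNearIdentityAt (𝓝 0) Ψ x)
    (hloc : (fun p : 𝕜 × E => φ p.1 p.2 - Ψ p.1 p.2 - p.1 ^ (k + 1) • g p.2)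
      =o[𝓝 0 ×ˢ 𝓝 x] fun p => p.1 ^ (k + 1)) (S : ℕ) :
    (fun h : 𝕜 => φ (S * h) x - (Ψ h)^[S] x - ((S : 𝕜) * h ^ (k + 1)) • g x)
      =o[𝓝 0] fun h => h ^ (k + 1) := by
  have hpow : Tendsto (fun h : 𝕜 => h ^ (k + 1)) (𝓝 0) (𝓝 0) := by
    simpa using (continuous_pow (M := 𝕜) (k + 1)).tendsto 0
  have hiter : ∀ (h : 𝕜) (n : ℕ), (φ h)^[n] x = φ (n * h) x :=
    iterate_eq_apply_natCast_mul hφ0 hφadd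
  have hflow : ∀ n : ℕ, Tendsto (fun h => (φ h)^[n] x) (𝓝 0) (𝓝 x) := by
    simpa only [hiter] using tendsto_apply_natCast_mul_of_continuousAt hφ0 hφcont
  simpa only [hiter] using hΨ.isLittleO_iterate_sub_iterate hpow hflow
    (isLittleO_sub_smul_const_of_continuousAt hg hloc) S

theorem stmt7 {D : ℕ} (S : ℕ) (hS : 1 ≤ S) (k : ℕ)
    (x : Fin D → ℝ) (ρ c : ℝ) (hρ : 0 < ρ) (hc : 0 ≤ c)
    (φ : ℝ → (Fin D → ℝ) → (Fin D → ℝ))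
    (hφ0 : ∀ y, φ 0 y = y)
    (hφadd : ∀ s t : ℝ, ∀ y, φ (s + t) y = φ s (φ t y))
    (hφcont : ContinuousAt (fun t => φ t x) 0)
    (g : (Fin D → ℝ) → (Fin D → ℝ))
    (hg : ContinuousOn g (Metric.closedBall x ρ))
    (Ψ : ℝ → (Fin D → ℝ) → (Fin D → ℝ))
    (hΨ : ∀ (h : ℝ) (y z : Fin D → ℝ), ‖(Ψ h y - Ψ h z) - (y - z)‖ ≤ c * |h| * ‖y - z‖)
    (ε : ℝ → ℝ)
    (hε : ε =o[𝓝 0] fun h : ℝ => h ^ (k + 1))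
    (hloc : ∀ h : ℝ, ∀ y ∈ Metric.closedBall x ρ,
      ‖φ h y - Ψ h y - h ^ (k + 1) • g y‖ ≤ ε h) :
    (fun h : ℝ => φ (S * h) x - (Ψ h)^[S] x - ((S : ℝ) * h ^ (k + 1)) • g x)
      =o[𝓝 0] fun h : ℝ => h ^ (k + 1) := by
  have hκ : Tendsto (fun h : ℝ => c * |h|) (𝓝 0) (𝓝 0) := by
    simpa using (continuous_abs.const_mul c).tendsto (0 : ℝ)
  have hball : Metric.closedBall x ρ ∈ 𝓝 x := Metric.closedBall_mem_nhds x hρ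
  exact stmt7_general (hφ0 x) (hφadd · · x) hφcont (hg.continuousAt hball)
    (isNearIdentityAt_of_norm_le hκ (.of_forall fun p => hΨ p.1 p.2.1 p.2.2))
    (isLittleO_prod_nhds_of_norm_le hball hε (.of_forall hloc)) S
end

section
/- Let D ≥ 1 and equip ℂ^D with the supremum (ℓ∞) norm. Fix a Runge–Kutta method with I stages and real coefficients a_{ij} (1 ≤ i, j ≤ I), and set κ := max_{1≤i≤I} Σ_{j=1}^I |a_{ij}|; assume κ > 0. Let K ⊆ ℂ^D, r, m > 0, let g : ℂ^D → ℂ^D be holomorphic on the open r-thickening B(K, r) with ‖g(z)‖ ≤ m there, let x ∈ K, and let h ∈ ℂ with |h| ≤ r/(4κm). Then there exists a unique tuple v = (v_1, …, v_I) of points of ℂ^D such that ‖v_i − x‖ ≤ |h|·κ·m for every i and the stage equations v_i = x + h·Σ_{j=1}^I a_{ij}·g(v_j) hold for every i. -/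
open Filter Topology Metric

/-!
The stages are the fixed points of the map sending `v` to `(x + h ∑ⱼ aᵢⱼ g(vⱼ))ᵢ`. Put
`ρ = |h| κ m`. Since `‖g‖ ≤ m` on `B(x, r)`, this map sends the product of the closed balls of
radius `ρ` about `x` into itself. By Cauchy's estimate `‖g'‖ ≤ m / (r - ρ)` on the closed ball, so
there the map is Lipschitz with constant `|h| κ m / (r - ρ) = ρ / (r - ρ)`, which is less than `1`
as soon as `ρ < r / 2`; the Banach fixed point theorem applies.
-/

section CauchyEstimate

variable {E F : Type*} [NormedAddCommGroup E] [NormedSpace ℂ E] [NormedAddCommGroup F]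
  [NormedSpace ℂ F] {f : E → F} {c : E} {R C : ℝ}

theorem norm_fderiv_apply_le_of_forall_mem_ball_norm_le (hf : DifferentiableOn ℂ f (ball c R))
    (hC : ∀ z ∈ ball c R, ‖f z‖ ≤ C) {v : E} (hv : ‖v‖ < R) : ‖fderiv ℂ f c v‖ ≤ C := by
  have line_mem_ball : ∀ t ∈ closedBall (0 : ℂ) 1, c + t • v ∈ ball c R := by
    intro t ht
    rw [mem_closedBall_zero_iff] at ht
    rw [mem_ball_iff_norm, add_sub_cancel_left, norm_smul]
    exact (mul_le_of_le_one_left (norm_nonneg v) ht).trans_lt hv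
  have slice_diffContOnCl : DiffContOnCl ℂ (fun t : ℂ ↦ f (c + t • v)) (ball 0 1) := by
    refine DifferentiableOn.diffContOnCl ?_
    rw [closure_ball 0 one_ne_zero]
    exact hf.comp (by fun_prop) line_mem_ball
  have deriv_slice : deriv (fun t : ℂ ↦ f (c + t • v)) 0 = fderiv ℂ f c v :=
    (hf.differentiableAt (ball_mem_nhds c ((norm_nonneg v).trans_lt hv))).lineDeriv_eq_fderiv
  simpa only [deriv_slice, div_one] using
    Complex.norm_deriv_le_of_forall_mem_sphere_norm_le one_pos slice_diffContOnCl
      fun t ht ↦ hC _ (line_mem_ball t (sphere_subset_closedBall ht))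

theorem norm_fderiv_le_div_of_forall_mem_ball_norm_le (hR : 0 < R)
    (hf : DifferentiableOn ℂ f (ball c R)) (hC : ∀ z ∈ ball c R, ‖f z‖ ≤ C) :
    ‖fderiv ℂ f c‖ ≤ C / R := by
  have hC₀ : 0 ≤ C := (norm_nonneg _).trans (hC c (mem_ball_self hR))
  have apply_le_on_closedBall : ∀ v ∈ closedBall (0 : E) R, ‖fderiv ℂ f c v‖ ≤ C := by
    rw [← closure_ball 0 hR.ne']
    refine closure_minimal (t := {v | ‖fderiv ℂ f c v‖ ≤ C}) (fun v hv ↦ ?_)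
      (isClosed_le (by fun_prop) continuous_const)
    exact norm_fderiv_apply_le_of_forall_mem_ball_norm_le hf hC (mem_ball_zero_iff.1 hv)
  refine ContinuousLinearMap.opNorm_le_of_unit_norm (by positivity) fun v hv ↦ ?_
  have norm_smul_eq : ‖(R : ℂ) • v‖ = R := by
    rw [norm_smul, hv, mul_one, Complex.norm_of_nonneg hR.le]
  have scaled_bound := apply_le_on_closedBall _ (mem_closedBall_zero_iff.2 norm_smul_eq.le)
  rwa [map_smul, norm_smul, Complex.norm_of_nonneg hR.le, ← le_div_iff₀' hR] at scaled_bound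

theorem dist_le_div_mul_dist_of_forall_mem_ball_norm_le {ρ : ℝ} (hρ : ρ < R)
    (hf : DifferentiableOn ℂ f (ball c R)) (hC : ∀ z ∈ ball c R, ‖f z‖ ≤ C) {y z : E}
    (hy : y ∈ closedBall c ρ) (hz : z ∈ closedBall c ρ) :
    dist (f y) (f z) ≤ C / (R - ρ) * dist y z := by
  have ball_subset : ∀ w ∈ closedBall c ρ, ball w (R - ρ) ⊆ ball c R := fun w hw ↦
    ball_subset_ball' (by linarith [mem_closedBall.1 hw])
  have norm_fderiv_le : ∀ w ∈ closedBall c ρ, ‖fderiv ℂ f w‖ ≤ C / (R - ρ) := fun w hw ↦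
    norm_fderiv_le_div_of_forall_mem_ball_norm_le (sub_pos.2 hρ) (hf.mono (ball_subset w hw))
      fun u hu ↦ hC u (ball_subset w hw hu)
  have differentiableAt : ∀ w ∈ closedBall c ρ, DifferentiableAt ℂ f w := fun w hw ↦
    hf.differentiableAt (isOpen_ball.mem_nhds (closedBall_subset_ball hρ hw))
  have convex : Convex ℝ (closedBall c ρ) := convex_closedBall c ρ
  simpa only [dist_eq_norm] using
    convex.norm_image_sub_le_of_norm_fderiv_le differentiableAt norm_fderiv_le hz hy

end CauchyEstimate

theorem existsUnique_mem_isFixedPt_of_lipschitzOnWith {α : Type*} [MetricSpace α] {f : α → α}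
    {s : Set α} {q : NNReal} (hs : IsComplete s) (hne : s.Nonempty) (hmaps : Set.MapsTo f s s)
    (hq : q < 1) (hlip : LipschitzOnWith q f s) :
    ∃! y, y ∈ s ∧ Function.IsFixedPt f y := by
  have hcontr : ContractingWith q (hmaps.restrict f s s) := ⟨hq, hlip.mapsToRestrict hmaps⟩
  obtain ⟨y₀, hy₀⟩ := hne
  obtain ⟨y, hys, hy, -⟩ := hcontr.exists_fixedPoint' hs hmaps hy₀ (edist_ne_top _ _)
  refine ⟨y, ⟨hys, hy⟩, fun z ⟨hzs, hz⟩ ↦ ?_⟩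
  exact congrArg Subtype.val <|
    hcontr.fixedPoint_unique' (x := ⟨z, hzs⟩) (y := ⟨y, hys⟩) (Subtype.ext hz) (Subtype.ext hy)

section StageMap

variable {ι 𝕜 𝕜' E : Type*} [Fintype ι] [NormedField 𝕜] [NormedField 𝕜'] [NormedAddCommGroup E]
  [NormedSpace 𝕜 E] [NormedSpace 𝕜' E]

/-- The right-hand side of the stage equations of a Runge–Kutta method with coefficients `a`, for
the vector field `g`, step `h` and initial value `x`, as a self-map of tuples of stages: its fixed
points are the solutions of the stage equations. The step and the coefficients may come from
different fields, so that a real method can be run with a complex step. -/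
def rungeKuttaStageMap (a : ι → ι → 𝕜) (g : E → E) (h : 𝕜') (x : E) (v : ι → E) : ι → E :=
  fun i ↦ x + h • ∑ j, a i j • g (v j)

variable {a : ι → ι → 𝕜} {g : E → E} {h : 𝕜'} {x : E} {κ M : ℝ}

theorem isFixedPt_rungeKuttaStageMap_iff {v : ι → E} :
    Function.IsFixedPt (rungeKuttaStageMap a g h x) v ↔
      ∀ i, v i = x + h • ∑ j, a i j • g (v j) :=
  eq_comm.trans funext_iff

theorem norm_smul_sum_smul_le {b : ι → 𝕜} {w : ι → E} (hb : ∑ j, ‖b j‖ ≤ κ) (hM : 0 ≤ M)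
    (hw : ∀ j, ‖w j‖ ≤ M) : ‖h • ∑ j, b j • w j‖ ≤ ‖h‖ * κ * M := by
  have sum_bound : ‖∑ j, b j • w j‖ ≤ κ * M :=
    calc ‖∑ j, b j • w j‖ ≤ ∑ j, ‖b j‖ * M :=
          norm_sum_le_of_le _ fun j _ ↦ by rw [norm_smul]; gcongr; exact hw j
      _ = (∑ j, ‖b j‖) * M := by rw [Finset.sum_mul]
      _ ≤ κ * M := by gcongr
  rw [norm_smul, mul_assoc]
  gcongr

theorem dist_rungeKuttaStageMap_apply_le {u v : ι → E} {i : ι} (ha : ∑ j, ‖a i j‖ ≤ κ)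
    (hM : 0 ≤ M) (huv : ∀ j, dist (g (u j)) (g (v j)) ≤ M) :
    dist (rungeKuttaStageMap a g h x u i) (rungeKuttaStageMap a g h x v i) ≤ ‖h‖ * κ * M := by
  have sub_eq : rungeKuttaStageMap a g h x u i - rungeKuttaStageMap a g h x v i =
      h • ∑ j, a i j • (g (u j) - g (v j)) := by
    simp only [rungeKuttaStageMap, add_sub_add_left_eq_sub, smul_sub, Finset.sum_sub_distrib]
  rw [dist_eq_norm, sub_eq]
  exact norm_smul_sum_smul_le ha hM fun j ↦ (dist_eq_norm _ _).symm.trans_le (huv j)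

theorem rungeKuttaStageMap_apply_mem_closedBall {v : ι → E} {i : ι} (ha : ∑ j, ‖a i j‖ ≤ κ)
    (hM : 0 ≤ M) (hv : ∀ j, ‖g (v j)‖ ≤ M) :
    rungeKuttaStageMap a g h x v i ∈ closedBall x (‖h‖ * κ * M) := by
  rw [mem_closedBall_iff_norm, rungeKuttaStageMap, add_sub_cancel_left]
  exact norm_smul_sum_smul_le ha hM hv

end StageMap

section HolomorphicStages

variable {ι 𝕜 E : Type*} [Fintype ι] [NormedField 𝕜] [NormedAddCommGroup E] [NormedSpace ℂ E]
  [NormedSpace 𝕜 E] {a : ι → ι → 𝕜} {κ r m : ℝ} {g : E → E} {x : E} {h : ℂ}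

theorem lipschitzOnWith_rungeKuttaStageMap (ha : ∀ i, ∑ j, ‖a i j‖ ≤ κ) (hκ : 0 ≤ κ)
    (hm : 0 ≤ m) (hg : DifferentiableOn ℂ g (ball x r)) (hgm : ∀ z ∈ ball x r, ‖g z‖ ≤ m)
    (hh : ‖h‖ * κ * m < r) :
    LipschitzOnWith (‖h‖ * κ * m / (r - ‖h‖ * κ * m)).toNNReal (rungeKuttaStageMap a g h x)
      (Set.univ.pi fun _ ↦ closedBall x (‖h‖ * κ * m)) := by
  set ρ := ‖h‖ * κ * m with hρ
  have : 0 < r - ρ := sub_pos.2 hh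
  refine LipschitzOnWith.of_dist_le' fun u hu v hv ↦ ?_
  refine (dist_pi_le_iff (by positivity)).2 fun i ↦ ?_
  have dist_g_le : ∀ j, dist (g (u j)) (g (v j)) ≤ m / (r - ρ) * dist u v := fun j ↦
    calc dist (g (u j)) (g (v j)) ≤ m / (r - ρ) * dist (u j) (v j) :=
          dist_le_div_mul_dist_of_forall_mem_ball_norm_le hh hg hgm (hu j trivial) (hv j trivial)
      _ ≤ m / (r - ρ) * dist u v := by gcongr; exact dist_le_pi_dist u v j
  calc dist (rungeKuttaStageMap a g h x u i) (rungeKuttaStageMap a g h x v i)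
      ≤ ‖h‖ * κ * (m / (r - ρ) * dist u v) :=
        dist_rungeKuttaStageMap_apply_le (ha i) (by positivity) dist_g_le
    _ = ρ / (r - ρ) * dist u v := by rw [hρ]; ring

theorem stmt9_general [CompleteSpace E] (ha : ∀ i, ∑ j, ‖a i j‖ ≤ κ) (hκ : 0 ≤ κ) (hr : 0 < r)
    (hg : DifferentiableOn ℂ g (ball x r)) (hgm : ∀ z ∈ ball x r, ‖g z‖ ≤ m)
    (hh : ‖h‖ * κ * m < r / 2) :
    ∃! v : ι → E, (∀ i, ‖v i - x‖ ≤ ‖h‖ * κ * m) ∧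
      ∀ i, v i = x + h • ∑ j, a i j • g (v j) := by
  have hm : 0 ≤ m := (norm_nonneg _).trans (hgm x (mem_ball_self hr))
  have hlt : ‖h‖ * κ * m < r := hh.trans (half_lt_self hr)
  let s : Set (ι → E) := Set.univ.pi fun _ ↦ closedBall x (‖h‖ * κ * m)
  have hs : IsComplete s := (isClosed_set_pi fun _ _ ↦ isClosed_closedBall).isComplete
  have hne : s.Nonempty := ⟨fun _ ↦ x, fun _ _ ↦ mem_closedBall_self (by positivity)⟩
  have hmaps : Set.MapsTo (rungeKuttaStageMap a g h x) s s := fun v hv i _ ↦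
    rungeKuttaStageMap_apply_mem_closedBall (ha i) hm fun j ↦
      hgm _ (closedBall_subset_ball hlt (hv j trivial))
  have hq : (‖h‖ * κ * m / (r - ‖h‖ * κ * m)).toNNReal < 1 := by
    rw [Real.toNNReal_lt_one, div_lt_one (sub_pos.2 hlt)]
    linarith
  have hlip := lipschitzOnWith_rungeKuttaStageMap ha hκ hm hg hgm hlt
  simpa only [s, Set.mem_univ_pi, mem_closedBall_iff_norm,
    isFixedPt_rungeKuttaStageMap_iff] using
    existsUnique_mem_isFixedPt_of_lipschitzOnWith hs hne hmaps hq hlip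

end HolomorphicStages

theorem stmt9 {D I : ℕ} (hD : 1 ≤ D) (hI : 1 ≤ I)
    (a : Fin I → Fin I → ℝ) (κ : ℝ)
    (hκ : κ = ⨆ i : Fin I, ∑ j : Fin I, |a i j|) (hκpos : 0 < κ)
    (K : Set (Fin D → ℂ)) (r m : ℝ) (hr : 0 < r) (hm : 0 < m)
    (g : (Fin D → ℂ) → (Fin D → ℂ))
    (hg : DifferentiableOn ℂ g (⋃ y ∈ K, ball y r))
    (hgb : ∀ z ∈ ⋃ y ∈ K, ball y r, ‖g z‖ ≤ m)
    (x : Fin D → ℂ) (hx : x ∈ K)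
    (h : ℂ) (hh : ‖h‖ ≤ r / (4 * κ * m)) :
    ∃! v : Fin I → (Fin D → ℂ),
      (∀ i, ‖v i - x‖ ≤ ‖h‖ * κ * m) ∧
      (∀ i, v i = x + h • ∑ j : Fin I, a i j • g (v j)) := by
  have ball_subset : ball x r ⊆ ⋃ y ∈ K, ball y r :=
    Set.subset_biUnion_of_mem (u := fun y ↦ ball y r) hx
  have row_sum_le : ∀ i, ∑ j, ‖a i j‖ ≤ κ := fun i ↦
    hκ ▸ le_ciSup (f := fun i ↦ ∑ j, |a i j|) (Set.finite_range _).bddAbove i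
  have radius_lt : ‖h‖ * κ * m < r / 2 := by
    rw [le_div_iff₀ (by positivity)] at hh
    linarith
  exact stmt9_general row_sum_le hκpos.le hr (hg.mono ball_subset)
    (fun z hz ↦ hgb z (ball_subset hz)) radius_lt
end

section
/- Let D ≥ 1 and equip ℂ^D with the supremum (ℓ∞) norm. Fix a Runge–Kutta method with I stages and real coefficients a_{ij}, b_i (1 ≤ i, j ≤ I), and set κ := max_{1≤i≤I} Σ_{j=1}^I |a_{ij}| and μ := Σ_{i=1}^I |b_i|; assume κ > 0. Let K ⊆ ℂ^D, r, m > 0, let g, ĝ : ℂ^D → ℂ^D be holomorphic on the open r-thickening B(K, r) with ‖g(z)‖ ≤ m and ‖ĝ(z)‖ ≤ m there, let x ∈ K, and let h ∈ ℂ with 0 < |h| ≤ r/(4κm). Let u and v be stage tuples with ‖u_i − x‖ ≤ |h|·κ·m, ‖v_i − x‖ ≤ |h|·κ·m, u_i = x + h·Σ_j a_{ij}·ĝ(u_j), and v_i = x + h·Σ_j a_{ij}·g(v_j) for all i, and let Φ_{h,ĝ}(x) := x + h·Σ_i b_i·ĝ(u_i) and Φ_{h,g}(x) := x + h·Σ_i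 b_i·g(v_i) be the corresponding outputs. If M ≥ 0 satisfies ‖ĝ(z) − g(z)‖ ≤ M for all z ∈ B(K, |h|·κ·m), then ‖Φ_{h,ĝ}(x) − Φ_{h,g}(x)‖ ≤ 2μ·|h|·M. -/
open Filter Topology Metric

/-!
By Cauchy's estimate on complex lines, `g` is Lipschitz with constant `L = 1 / (2 * ‖h‖ * κ)` on
the closed ball of radius `ρ = ‖h‖ * κ * m` around `x`, since a ball of radius `2 * ρ` around any of
its points stays inside the domain. If `δ` is the largest of the slope discrepancies
`‖ĝ (u j) - g (v j)‖`, the stage equations bound `‖u j - v j‖` by `‖h‖ * κ * δ`, so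
`δ ≤ M + L * ‖h‖ * κ * δ = M + δ / 2`. Hence `δ ≤ 2 * M`, and summing against the weights `b`
gives the bound on the outputs.
-/

section CauchyEstimate

variable {E F : Type*} [NormedAddCommGroup E] [NormedSpace ℂ E]
  [NormedAddCommGroup F] [NormedSpace ℂ F]

theorem norm_fderiv_le_of_forall_mem_sphere_norm_le {f : E → F} {c : E} {R C : ℝ} (hR : 0 < R)
    (hC₀ : 0 ≤ C) (hf : DiffContOnCl ℂ f (ball c R)) (hC : ∀ z ∈ sphere c R, ‖f z‖ ≤ C) :
    ‖fderiv ℂ f c‖ ≤ C / R := by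
  refine ContinuousLinearMap.opNorm_le_of_unit_norm (by positivity) fun w hw ↦ ?_
  have hdist (t : ℂ) : dist (c + t • w) c = dist t 0 := by simp [norm_smul, hw]
  have hline : DiffContOnCl ℂ (fun t : ℂ ↦ f (c + t • w)) (ball 0 R) :=
    hf.comp (Differentiable.diffContOnCl (by fun_prop)) fun t ht ↦ by
      rwa [mem_ball, hdist]
  have hline_bound (t : ℂ) (ht : t ∈ sphere 0 R) : ‖f (c + t • w)‖ ≤ C :=
    hC _ (by rwa [mem_sphere, hdist])
  rw [← (hf.differentiableAt isOpen_ball (mem_ball_self hR)).lineDeriv_eq_fderiv]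
  exact Complex.norm_deriv_le_of_forall_mem_sphere_norm_le hR hline hline_bound

theorem norm_image_sub_le_of_norm_le_on_ball {f : E → F} {x u v : E} {r ρ R C : ℝ} (hR : 0 < R)
    (hr : ρ + R < r) (hf : DifferentiableOn ℂ f (ball x r)) (hC : ∀ z ∈ ball x r, ‖f z‖ ≤ C)
    (hu : u ∈ closedBall x ρ) (hv : v ∈ closedBall x ρ) :
    ‖f u - f v‖ ≤ C / R * ‖u - v‖ := by
  have hsub {z : E} (hz : z ∈ closedBall x ρ) : closedBall z R ⊆ ball x r :=
    (closedBall_subset_closedBall' (by rw [mem_closedBall] at hz; linarith)).trans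
      (closedBall_subset_ball hr)
  have hmem {z : E} (hz : z ∈ closedBall x ρ) : z ∈ ball x r :=
    hsub hz (mem_closedBall_self hR.le)
  refine Convex.norm_image_sub_le_of_norm_fderiv_le (𝕜 := ℂ) (s := closedBall x ρ)
    (fun z hz ↦ hf.differentiableAt (isOpen_ball.mem_nhds (hmem hz))) (fun z hz ↦ ?_)
    (convex_closedBall x ρ) hv hu
  exact norm_fderiv_le_of_forall_mem_sphere_norm_le hR ((norm_nonneg _).trans (hC z (hmem hz)))
    (hf.mono (closure_ball_subset_closedBall.trans (hsub hz))).diffContOnCl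
    fun w hw ↦ hC w (hsub hz (sphere_subset_closedBall hw))

end CauchyEstimate

theorem norm_le_on_closedBall_of_norm_le_on_ball {E F : Type*} [NormedAddCommGroup E]
    [NormedSpace ℝ E] [SeminormedAddCommGroup F] {f : E → F} {x : E} {ρ C : ℝ} (hρ : ρ ≠ 0)
    (hf : ContinuousOn f (closedBall x ρ)) (hC : ∀ z ∈ ball x ρ, ‖f z‖ ≤ C) :
    ∀ z ∈ closedBall x ρ, ‖f z‖ ≤ C := by
  rw [← closure_ball x hρ] at hf ⊢
  exact fun z hz ↦ le_on_closure hC hf.norm continuousOn_const hz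

section RungeKutta

variable {𝕜 E ι : Type*} [NormedField 𝕜] [NormedAddCommGroup E] [NormedSpace 𝕜 E]
  [NormedSpace ℝ E] [Fintype ι]

/-- The Runge–Kutta update `x + h * ∑ i, c i * f (w i)` with weights `c` and stages `w`. The output
`Φ_{h,f}(x)` of the method has `c = b`; the right-hand side of the `i`-th stage equation has
`c = a i`. -/
def rungeKuttaUpdate (h : 𝕜) (c : ι → ℝ) (f : E → E) (x : E) (w : ι → E) : E :=
  x + h • ∑ i, c i • f (w i)

/-- `w` is a tuple of stages, started at `x`, of the Runge–Kutta method with matrix `a` and step `h`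
for the vector field `f`. For an implicit method such a tuple need neither exist nor be unique, so
stages are described by their equations rather than by a function of `x`. -/
def IsRungeKuttaStages (a : ι → ι → ℝ) (h : 𝕜) (f : E → E) (x : E) (w : ι → E) : Prop :=
  ∀ i, w i = rungeKuttaUpdate h (a i) f x w

variable {a : ι → ι → ℝ} {c : ι → ℝ} {h : 𝕜} {f g : E → E} {x : E} {u v : ι → E} {κ L M δ : ℝ}

theorem norm_rungeKuttaUpdate_sub_le (hδ : ∀ i, ‖f (u i) - g (v i)‖ ≤ δ) :
    ‖rungeKuttaUpdate h c f x u - rungeKuttaUpdate h c g x v‖ ≤ ‖h‖ * ((∑ i, |c i|) * δ) := by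
  calc ‖rungeKuttaUpdate h c f x u - rungeKuttaUpdate h c g x v‖
      = ‖h‖ * ‖∑ i, c i • (f (u i) - g (v i))‖ := by
        simp only [rungeKuttaUpdate, add_sub_add_left_eq_sub, ← smul_sub,
          ← Finset.sum_sub_distrib, norm_smul]
    _ ≤ ‖h‖ * ((∑ i, |c i|) * δ) := by
        rw [Finset.sum_mul]
        gcongr
        refine norm_sum_le_of_le _ fun i _ ↦ ?_
        rw [norm_smul, Real.norm_eq_abs]
        gcongr
        exact hδ i

theorem IsRungeKuttaStages.norm_slope_sub_le (hu : IsRungeKuttaStages a h f x u)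
    (hv : IsRungeKuttaStages a h g x v) (ha : ∀ i, ∑ j, |a i j| ≤ κ) (hL : 0 ≤ L)
    (hcontr : L * (‖h‖ * κ) < 1) (hfg : ∀ i, ‖f (u i) - g (u i)‖ ≤ M)
    (hg : ∀ i, ‖g (u i) - g (v i)‖ ≤ L * ‖u i - v i‖) (i : ι) :
    ‖f (u i) - g (v i)‖ ≤ M / (1 - L * (‖h‖ * κ)) := by
  have : Nonempty ι := ⟨i⟩
  obtain ⟨k, hk⟩ := Finite.exists_max fun j ↦ ‖f (u j) - g (v j)‖
  set δ := ‖f (u k) - g (v k)‖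
  have hstage : ‖u k - v k‖ ≤ ‖h‖ * (κ * δ) := by
    rw [hu k, hv k]
    refine (norm_rungeKuttaUpdate_sub_le hk).trans ?_
    gcongr
    exact ha k
  have hself : δ ≤ M + L * (‖h‖ * κ) * δ :=
    calc δ ≤ ‖f (u k) - g (u k)‖ + ‖g (u k) - g (v k)‖ := norm_sub_le_norm_sub_add_norm_sub ..
      _ ≤ M + L * ‖u k - v k‖ := add_le_add (hfg k) (hg k)
      _ ≤ M + L * (‖h‖ * (κ * δ)) := by gcongr
      _ = M + L * (‖h‖ * κ) * δ := by ring
  refine (hk i).trans ?_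
  rw [le_div_iff₀ (sub_pos.2 hcontr)]
  linarith

end RungeKutta

theorem stmt11_general {E ι : Type*} [NormedAddCommGroup E] [NormedSpace ℂ E] [Fintype ι]
    {a : ι → ι → ℝ} {b : ι → ℝ} {κ r m M : ℝ} {g ghat : E → E} {x : E} {h : ℂ} {u v : ι → E}
    (ha : ∀ i, ∑ j, |a i j| ≤ κ) (hκ : 0 < κ) (hm : 0 < m)
    (hg : DifferentiableOn ℂ g (ball x r)) (hgb : ∀ z ∈ ball x r, ‖g z‖ ≤ m)
    (hghat : ContinuousOn ghat (ball x r)) (hh0 : h ≠ 0) (hh : ‖h‖ < r / (3 * κ * m))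
    (hu_mem : ∀ i, u i ∈ closedBall x (‖h‖ * κ * m))
    (hv_mem : ∀ i, v i ∈ closedBall x (‖h‖ * κ * m))
    (hu : IsRungeKuttaStages a h ghat x u) (hv : IsRungeKuttaStages a h g x v)
    (hM : ∀ z ∈ ball x (‖h‖ * κ * m), ‖ghat z - g z‖ ≤ M) :
    ‖rungeKuttaUpdate h b ghat x u - rungeKuttaUpdate h b g x v‖
      ≤ 2 * (∑ i, |b i|) * ‖h‖ * M := by
  set ρ := ‖h‖ * κ * m with hρ_def
  have hρ : 0 < ρ := by positivity
  have hρ_lt : 3 * ρ < r := by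
    rw [lt_div_iff₀ (by positivity)] at hh
    linarith
  have hsub : closedBall x ρ ⊆ ball x r := closedBall_subset_ball (by linarith)
  have hM_closed : ∀ z ∈ closedBall x ρ, ‖ghat z - g z‖ ≤ M :=
    norm_le_on_closedBall_of_norm_le_on_ball hρ.ne' ((hghat.sub hg.continuousOn).mono hsub) hM
  have hlip (i : ι) : ‖g (u i) - g (v i)‖ ≤ m / (2 * ρ) * ‖u i - v i‖ :=
    norm_image_sub_le_of_norm_le_on_ball (by positivity) (by linarith) hg hgb (hu_mem i) (hv_mem i)
  have hhalf : m / (2 * ρ) * (‖h‖ * κ) = 1 / 2 := by rw [hρ_def]; field_simp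
  have hslope := hu.norm_slope_sub_le hv ha (by positivity) (by linarith)
    (fun i ↦ hM_closed _ (hu_mem i)) hlip
  calc _ ≤ ‖h‖ * ((∑ i, |b i|) * (M / (1 - m / (2 * ρ) * (‖h‖ * κ)))) :=
        norm_rungeKuttaUpdate_sub_le hslope
    _ = 2 * (∑ i, |b i|) * ‖h‖ * M := by rw [hhalf]; ring

theorem stmt11 {D I : ℕ} (hD : 1 ≤ D) (hI : 1 ≤ I)
    (a : Fin I → Fin I → ℝ) (b : Fin I → ℝ) (κ μ : ℝ)
    (hκ : κ = ⨆ i : Fin I, ∑ j : Fin I, |a i j|) (hκpos : 0 < κ)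
    (hμ : μ = ∑ i : Fin I, |b i|)
    (K : Set (Fin D → ℂ)) (r m : ℝ) (hr : 0 < r) (hm : 0 < m)
    (g ghat : (Fin D → ℂ) → (Fin D → ℂ))
    (hg : DifferentiableOn ℂ g (⋃ y ∈ K, ball y r))
    (hghat : DifferentiableOn ℂ ghat (⋃ y ∈ K, ball y r))
    (hgb : ∀ z ∈ ⋃ y ∈ K, ball y r, ‖g z‖ ≤ m)
    (hghatb : ∀ z ∈ ⋃ y ∈ K, ball y r, ‖ghat z‖ ≤ m)
    (x : Fin D → ℂ) (hx : x ∈ K)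
    (h : ℂ) (hh0 : 0 < ‖h‖) (hh : ‖h‖ ≤ r / (4 * κ * m))
    (u v : Fin I → (Fin D → ℂ))
    (hu1 : ∀ i, ‖u i - x‖ ≤ ‖h‖ * κ * m)
    (hv1 : ∀ i, ‖v i - x‖ ≤ ‖h‖ * κ * m)
    (hu2 : ∀ i, u i = x + h • ∑ j : Fin I, a i j • ghat (u j))
    (hv2 : ∀ i, v i = x + h • ∑ j : Fin I, a i j • g (v j))
    (M : ℝ) (hM : 0 ≤ M)
    (hMb : ∀ z ∈ ⋃ y ∈ K, ball y (‖h‖ * κ * m), ‖ghat z - g z‖ ≤ M) :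
    ‖(x + h • ∑ i : Fin I, b i • ghat (u i)) - (x + h • ∑ i : Fin I, b i • g (v i))‖
      ≤ 2 * μ * ‖h‖ * M := by
  subst hκ hμ
  have hsub (s : ℝ) : ball x s ⊆ ⋃ y ∈ K, ball y s := Set.subset_biUnion_of_mem (u := (ball · s)) hx
  exact stmt11_general (le_ciSup (Set.finite_range _).bddAbove) hκpos hm (hg.mono (hsub r))
    (fun z hz ↦ hgb z (hsub r hz)) (hghat.continuousOn.mono (hsub r)) (norm_pos_iff.1 hh0)
    (hh.trans_lt (by gcongr; norm_num)) (fun i ↦ mem_closedBall_iff_norm.2 (hu1 i))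
    (fun i ↦ mem_closedBall_iff_norm.2 (hv1 i)) hu2 hv2 fun z hz ↦ hMb z (hsub _ hz)
end

section
/- Let D ≥ 1 and equip ℂ^D with the supremum (ℓ∞) norm. Let h₁ > 0, C ≥ 0, and let F : ℂ → ℂ^D be holomorphic on the open disk {z ∈ ℂ : |z| < h₁} with F(0) = 0 and ‖F(z)‖ ≤ C for all z in that disk. Then for every h ∈ ℂ with 0 < |h| < h₁, ‖F′(0)‖ ≤ ‖F(h)‖/|h| + C·|h| / (h₁·(h₁ − |h|)). -/
open Filter Topology Metric

/-!
Dividing out the zero of `F` at the origin leaves the holomorphic quotient `G z = F z / z`, with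
`G 0 = F′(0)`, and the Schwarz lemma bounds `G` by `C / h₁` on the whole disk. Cauchy's estimate on
the disk of radius `h₁ - ‖w‖` about `w` then bounds `G′(w)` by `(C / h₁) / (h₁ - ‖h‖)` for
`‖w‖ ≤ ‖h‖`, so by the mean value inequality `G` moves by at most `C ‖h‖ / (h₁ (h₁ - ‖h‖))`
between `0` and `h`.
-/

section

variable {E : Type*} [NormedAddCommGroup E] [NormedSpace ℂ E] {f : ℂ → E} {c z : ℂ} {R C : ℝ}

theorem norm_deriv_le_div_of_forall_mem_ball_norm_le (hR : 0 < R)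
    (hf : DifferentiableOn ℂ f (ball c R)) (hC : ∀ w ∈ ball c R, ‖f w‖ ≤ C) :
    ‖deriv f c‖ ≤ C / R := by
  have hlim : Tendsto (fun r : ℝ ↦ C / r) (𝓝[<] R) (𝓝 (C / R)) :=
    (tendsto_const_nhds.div tendsto_id hR.ne').mono_left nhdsWithin_le_nhds
  refine ge_of_tendsto hlim ?_
  filter_upwards [Ioo_mem_nhdsLT hR] with r ⟨hr, hrR⟩
  have hsub : closedBall c r ⊆ ball c R := closedBall_subset_ball hrR
  exact Complex.norm_deriv_le_of_forall_mem_sphere_norm_le hr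
    ((hf.mono hsub).diffContOnCl_ball subset_rfl)
    fun w hw ↦ hC w (hsub (sphere_subset_closedBall hw))

theorem norm_deriv_le_div_sub_dist_of_forall_mem_ball_norm_le (hz : z ∈ ball c R)
    (hf : DifferentiableOn ℂ f (ball c R)) (hC : ∀ w ∈ ball c R, ‖f w‖ ≤ C) :
    ‖deriv f z‖ ≤ C / (R - dist z c) := by
  have hsub : ball z (R - dist z c) ⊆ ball c R := ball_subset_ball' (by simp)
  exact norm_deriv_le_div_of_forall_mem_ball_norm_le (sub_pos.2 hz) (hf.mono hsub)
    fun w hw ↦ hC w (hsub hw)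

theorem norm_sub_center_le_of_forall_mem_ball_norm_le (hz : z ∈ ball c R)
    (hf : DifferentiableOn ℂ f (ball c R)) (hC : ∀ w ∈ ball c R, ‖f w‖ ≤ C) :
    ‖f z - f c‖ ≤ C / (R - dist z c) * dist z c := by
  have hC₀ : 0 ≤ C := (norm_nonneg _).trans (hC z hz)
  have hzR : 0 < R - dist z c := sub_pos.2 hz
  have hsub : closedBall c (dist z c) ⊆ ball c R := closedBall_subset_ball hz
  have hderiv : ∀ w ∈ closedBall c (dist z c), ‖deriv f w‖ ≤ C / (R - dist z c) := by
    intro w hw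
    calc ‖deriv f w‖ ≤ C / (R - dist w c) :=
          norm_deriv_le_div_sub_dist_of_forall_mem_ball_norm_le (hsub hw) hf hC
      _ ≤ C / (R - dist z c) := by
          gcongr
          exact hw
  have hmean := (convex_closedBall c (dist z c)).norm_image_sub_le_of_norm_deriv_le
    (fun w hw ↦ hf.differentiableAt (isOpen_ball.mem_nhds (hsub hw))) hderiv
    (mem_closedBall_self dist_nonneg) (mem_closedBall.2 le_rfl)
  rwa [← dist_eq_norm z c] at hmean

theorem norm_dslope_sub_deriv_le_of_mapsTo_ball (hz : z ∈ ball c R)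
    (hf : DifferentiableOn ℂ f (ball c R)) (hmaps : Set.MapsTo f (ball c R) (closedBall (f c) C)) :
    ‖dslope f c z - deriv f c‖ ≤ C / R / (R - dist z c) * dist z c := by
  -- `dslope f c` may fail to be differentiable at `c` if `E` is incomplete, hence the detour
  -- through the completion of `E`.
  let e : E →L[ℂ] UniformSpace.Completion E := UniformSpace.Completion.toComplL
  have he : ∀ x, ‖e x‖ = ‖x‖ := UniformSpace.Completion.norm_coe
  have hc : ball c R ∈ 𝓝 c := ball_mem_nhds c (pos_of_mem_ball hz)
  have hcomp : dslope (e ∘ f) c = e ∘ dslope f c :=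
    funext fun w ↦ e.dslope_comp f c w fun _ ↦ hf.differentiableAt hc
  have hdiff : DifferentiableOn ℂ (e ∘ dslope f c) (ball c R) :=
    hcomp ▸ (Complex.differentiableOn_dslope hc).2 (e.differentiable.comp_differentiableOn hf)
  have hbound : ∀ w ∈ ball c R, ‖(e ∘ dslope f c) w‖ ≤ C / R := fun w hw ↦
    (he _).trans_le (Complex.norm_dslope_le_div_of_mapsTo_ball hf hmaps hw)
  simpa only [Function.comp_apply, ← map_sub, he, dslope_same] using
    norm_sub_center_le_of_forall_mem_ball_norm_le hz hdiff hbound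

theorem stmt12_general (hz : z ∈ ball c R) (hzc : z ≠ c)
    (hf : DifferentiableOn ℂ f (ball c R)) (hmaps : Set.MapsTo f (ball c R) (closedBall (f c) C)) :
    ‖deriv f c‖ ≤ ‖f z - f c‖ / ‖z - c‖ + C * ‖z - c‖ / (R * (R - ‖z - c‖)) := by
  have hslope : ‖dslope f c z‖ = ‖f z - f c‖ / ‖z - c‖ := by
    rw [dslope_of_ne f hzc, slope_def_module, norm_smul, norm_inv, inv_mul_eq_div]
  calc ‖deriv f c‖ ≤ ‖dslope f c z‖ + ‖dslope f c z - deriv f c‖ := norm_le_insert _ _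
    _ ≤ ‖f z - f c‖ / ‖z - c‖ + C / R / (R - dist z c) * dist z c := by
        rw [hslope]
        gcongr
        exact norm_dslope_sub_deriv_le_of_mapsTo_ball hz hf hmaps
    _ = ‖f z - f c‖ / ‖z - c‖ + C * ‖z - c‖ / (R * (R - ‖z - c‖)) := by
        rw [dist_eq_norm, div_div, div_mul_eq_mul_div]

end

theorem stmt12 {D : ℕ} (hD : 1 ≤ D) (h₁ C : ℝ) (hh₁ : 0 < h₁) (hC : 0 ≤ C)
    (F : ℂ → Fin D → ℂ)
    (hF : DifferentiableOn ℂ F (ball 0 h₁))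
    (hF0 : F 0 = 0)
    (hFb : ∀ z ∈ ball (0 : ℂ) h₁, ‖F z‖ ≤ C) :
    ∀ h : ℂ, 0 < ‖h‖ → ‖h‖ < h₁ →
      ‖deriv F 0‖ ≤ ‖F h‖ / ‖h‖ + C * ‖h‖ / (h₁ * (h₁ - ‖h‖)) := by
  intro h hpos hlt
  simpa [hF0] using stmt12_general (mem_ball_zero_iff.2 hlt) (norm_pos_iff.1 hpos) hF
    fun z hz ↦ by simpa [hF0] using hFb z hz
end

section
/- Let E be a real vector space, g : E → E, x ∈ E, and let h, ĥ ∈ ℝ with h + ĥ ≠ 0. Fix Runge–Kutta coefficients a_{ij}, b_i (1 ≤ i, j ≤ I) and â_{ij}, b̂_i (1 ≤ i, j ≤ Î). Suppose v = (v_1, …, v_I) satisfies v_i = x + h·Σ_{j=1}^I a_{ij}·g(v_j) with output y := x + h·Σ_{j=1}^I b_j·g(v_j), and w = (w_1, …, w_Î) satisfies w_i = y + ĥ·Σ_{j=1}^{Î} â_{ij}·g(w_j) with output z := y + ĥ·Σ_{j=1}^{Î} b̂_j·g(w_j). Define combined coefficients on the index set {1,…,I} ⊔ {1,…,Î} by: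 A_{(i)(j)} = a_{ij}·h/(h+ĥ) and A_{(i)(ĵ)} = 0 for i, j among the first I indices and ĵ among the last Î; A_{(î)(j)} = b_j·h/(h+ĥ) and A_{(î)(ĵ)} = â_{îĵ}·ĥ/(h+ĥ) for î, ĵ among the last Î indices; and weights B_{(j)} = b_j·h/(h+ĥ), B_{(ĵ)} = b̂_ĵ·ĥ/(h+ĥ). Then the concatenated stage tuple V (equal to v on the first I indices and w on the last Î indices) satisfies V_i = x + (h+ĥ)·Σ_j A_{ij}·g(V_j) for every index i, and z = x + (h+ĥ)·Σ_j B_j·g(V_j). -/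
/-- Combined Runge–Kutta stage coefficients for the composition of a step of size `h`
(with coefficients `a`, `b`) followed by a step of size `hhat` (with coefficients
`ahat`), viewed as a single method with step `h + hhat`. -/
noncomputable def combA {I Ihat : ℕ} (a : Fin I → Fin I → ℝ) (b : Fin I → ℝ)
    (ahat : Fin Ihat → Fin Ihat → ℝ) (h hhat : ℝ) :
    (Fin I ⊕ Fin Ihat) → (Fin I ⊕ Fin Ihat) → ℝ
  | Sum.inl i, Sum.inl j => a i j * h / (h + hhat)
  | Sum.inl _, Sum.inr _ => 0
  | Sum.inr _, Sum.inl j => b j * h / (h + hhat)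
  | Sum.inr i, Sum.inr j => ahat i j * hhat / (h + hhat)

/-- Combined Runge–Kutta weights for the composition. -/
noncomputable def combB {I Ihat : ℕ} (b : Fin I → ℝ) (bhat : Fin Ihat → ℝ) (h hhat : ℝ) :
    (Fin I ⊕ Fin Ihat) → ℝ
  | Sum.inl j => b j * h / (h + hhat)
  | Sum.inr j => bhat j * hhat / (h + hhat)

/-- The weights of a step of size `h + k` made of weights `β` for a step of size `h` followed by
weights `γ` for a step of size `k`, on the disjoint union of the two sets of stages. -/
def compositeWeight {K ι κ : Type*} [Semifield K] (β : ι → K) (γ : κ → K) (h k : K) : ι ⊕ κ → K :=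
  Sum.elim (fun j => β j * h / (h + k)) (fun j => γ j * k / (h + k))

/-- The stage coefficients of the composition of two Runge–Kutta steps of sizes `h` and `k`.
Each row is a `compositeWeight`: a stage of the first step does not see the second step, hence the
weights `0`, and a stage of the second step starts from the output of the first, hence the
weights `b`. -/
def compositeCoeff {K ι κ : Type*} [Semifield K] (a : ι → ι → K) (b : ι → K) (ahat : κ → κ → K)
    (h k : K) : ι ⊕ κ → ι ⊕ κ → K :=
  Sum.elim (fun i => compositeWeight (a i) 0 h k) (fun i => compositeWeight b (ahat i) h k)

section

variable {K E ι κ : Type*} [Semifield K] [AddCommMonoid E] [Module K E]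

theorem smul_sum_mul_div_smul {s : K} (hs : s ≠ 0) (t : Finset ι) (c : ι → K) (k : K) (u : ι → E) :
    s • ∑ j ∈ t, (c j * k / s) • u j = k • ∑ j ∈ t, c j • u j := by
  simp only [Finset.smul_sum, smul_smul, mul_div_cancel₀ _ hs, mul_comm k]

variable [Fintype ι] [Fintype κ]

theorem add_smul_sum_compositeWeight {h k : K} (hsum : h + k ≠ 0) (β : ι → K) (γ : κ → K)
    (x : E) (u : ι ⊕ κ → E) :
    x + (h + k) • ∑ j, compositeWeight β γ h k j • u j =
      (x + h • ∑ j, β j • u (Sum.inl j)) + k • ∑ j, γ j • u (Sum.inr j) := by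
  simp only [compositeWeight, Fintype.sum_sum_type, Sum.elim_inl, Sum.elim_inr, smul_add,
    smul_sum_mul_div_smul hsum, add_assoc]

theorem stmt13_general (g : E → E) (x : E) (h k : K) (hsum : h + k ≠ 0)
    (a : ι → ι → K) (b : ι → K) (ahat : κ → κ → K) (bhat : κ → K)
    (v : ι → E) (w : κ → E) (y z : E)
    (hv : ∀ i, v i = x + h • ∑ j, a i j • g (v j))
    (hy : y = x + h • ∑ j, b j • g (v j))
    (hw : ∀ i, w i = y + k • ∑ j, ahat i j • g (w j))
    (hz : z = y + k • ∑ j, bhat j • g (w j)) :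
    (∀ i, Sum.elim v w i =
        x + (h + k) • ∑ j, compositeCoeff a b ahat h k i j • g (Sum.elim v w j)) ∧
    z = x + (h + k) • ∑ j, compositeWeight b bhat h k j • g (Sum.elim v w j) := by
  have composite_step (β : ι → K) (γ : κ → K) :
      x + (h + k) • ∑ j, compositeWeight β γ h k j • g (Sum.elim v w j) =
        (x + h • ∑ j, β j • g (v j)) + k • ∑ j, γ j • g (w j) :=
    add_smul_sum_compositeWeight hsum β γ x (fun j => g (Sum.elim v w j))
  refine ⟨?_, ?_⟩
  · rintro (i | i)
    · simpa only [compositeCoeff, Sum.elim_inl, composite_step, Pi.zero_apply, zero_smul,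
        Finset.sum_const_zero, smul_zero, add_zero] using hv i
    · simpa only [compositeCoeff, Sum.elim_inr, composite_step, ← hy] using hw i
  · rwa [composite_step, ← hy]

end

theorem combB_eq_compositeWeight {I Ihat : ℕ} (b : Fin I → ℝ) (bhat : Fin Ihat → ℝ) (h hhat : ℝ) :
    combB b bhat h hhat = compositeWeight b bhat h hhat := by
  ext (j | j) <;> rfl

theorem combA_eq_compositeCoeff {I Ihat : ℕ} (a : Fin I → Fin I → ℝ) (b : Fin I → ℝ)
    (ahat : Fin Ihat → Fin Ihat → ℝ) (h hhat : ℝ) :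
    combA a b ahat h hhat = compositeCoeff a b ahat h hhat := by
  ext (i | i) (j | j) <;> simp [combA, compositeCoeff, compositeWeight]

theorem stmt13 {E : Type*} [AddCommGroup E] [Module ℝ E]
    {I Ihat : ℕ} (g : E → E) (x : E) (h hhat : ℝ) (hsum : h + hhat ≠ 0)
    (a : Fin I → Fin I → ℝ) (b : Fin I → ℝ)
    (ahat : Fin Ihat → Fin Ihat → ℝ) (bhat : Fin Ihat → ℝ)
    (v : Fin I → E) (w : Fin Ihat → E) (y z : E)
    (hv : ∀ i, v i = x + h • ∑ j : Fin I, a i j • g (v j))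
    (hy : y = x + h • ∑ j : Fin I, b j • g (v j))
    (hw : ∀ i, w i = y + hhat • ∑ j : Fin Ihat, ahat i j • g (w j))
    (hz : z = y + hhat • ∑ j : Fin Ihat, bhat j • g (w j)) :
    (∀ i : Fin I ⊕ Fin Ihat,
        Sum.elim v w i = x + (h + hhat) •
          ∑ j : Fin I ⊕ Fin Ihat, combA a b ahat h hhat i j • g (Sum.elim v w j)) ∧
    z = x + (h + hhat) •
          ∑ j : Fin I ⊕ Fin Ihat, combB b bhat h hhat j • g (Sum.elim v w j) := by
  simpa only [combA_eq_compositeCoeff, combB_eq_compositeWeight] using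
    stmt13_general g x h hhat hsum a b ahat bhat v w y z hv hy hw hz
end

section
/- Let E = ℝ^D, let g : E → E be smooth (of class C^∞), and let x ∈ E. Define the explicit midpoint step Φ_h(x) := x + h·g(x + (h/2)·g(x)). Then, as h → 0, Φ_h(x) = x + h·g(x) + (h²/2)·g′(x)g(x) + (h³/8)·g″(x)(g(x), g(x)) + (h⁴/48)·g‴(x)(g(x), g(x), g(x)) + o(h⁴). -/
open Filter Topology Asymptotics

/-!
Along the line `t ↦ x + t • v` the `k`-th derivative of `g` at `t = 0` is `g⁽ᵏ⁾(x)(v, …, v)`, so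
Taylor's theorem with Peano remainder in one real variable expands `g (x + t • v)` to order `o(tⁿ)`.
The midpoint step is the case `v = g x`, `t = h / 2`; its outer factor `h` raises the order by one.
-/

section LineRestriction

variable {𝕜 E F : Type*} [NontriviallyNormedField 𝕜]
  [NormedAddCommGroup E] [NormedSpace 𝕜 E] [NormedAddCommGroup F] [NormedSpace 𝕜 F]

theorem iteratedDeriv_comp_add_smul {n : ℕ} {f : E → F} {x v : E} {t : 𝕜}
    (hf : ContDiffAt 𝕜 n f (x + t • v)) :
    iteratedDeriv n (fun s : 𝕜 ↦ f (x + s • v)) t =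
      iteratedFDeriv 𝕜 n f (x + t • v) fun _ ↦ v := by
  induction n generalizing t with
  | zero => simp
  | succ n ih =>
    have line_tendsto : Tendsto (fun s : 𝕜 ↦ x + s • v) (𝓝 t) (𝓝 (x + t • v)) :=
      Continuous.tendsto (by fun_prop) t
    have eventually_eq : iteratedDeriv n (fun s : 𝕜 ↦ f (x + s • v)) =ᶠ[𝓝 t]
        fun s ↦ iteratedFDeriv 𝕜 n f (x + s • v) fun _ ↦ v := by
      filter_upwards [line_tendsto.eventually (hf.eventually (by simp))] with s hs
      exact ih (hs.of_le (by exact_mod_cast n.le_succ))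
    rw [iteratedDeriv_succ, eventually_eq.deriv_eq]
    exact ContDiffAt.deriv_fderiv_add_smul (by exact_mod_cast hf)

end LineRestriction

section Taylor

variable {E F : Type*} [NormedAddCommGroup E] [NormedSpace ℝ E]
  [NormedAddCommGroup F] [NormedSpace ℝ F] {n : ℕ}

theorem isLittleO_sub_sum_iteratedDeriv {f : ℝ → F} {a : ℝ} (hf : ContDiffAt ℝ n f a) :
    (fun t ↦ f t - ∑ k ∈ Finset.range (n + 1),
        ((t - a) ^ k / k.factorial) • iteratedDeriv k f a)
      =o[𝓝 a] fun t ↦ (t - a) ^ n := by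
  obtain ⟨u, hu, hfu⟩ := hf.contDiffOn le_rfl (by simp)
  obtain ⟨ε, hε, ball_subset⟩ := Metric.mem_nhds_iff.1 (by simpa using hu)
  have ha : a ∈ Metric.ball a ε := Metric.mem_ball_self hε
  have taylor := taylor_isLittleO (convex_ball a ε) ha (hfu.mono ball_subset)
  rw [Metric.isOpen_ball.nhdsWithin_eq ha] at taylor
  refine taylor.congr_left fun t ↦ ?_
  simp only [taylor_within_apply, iteratedDerivWithin_of_isOpen Metric.isOpen_ball ha,
    div_eq_inv_mul]

theorem isLittleO_comp_add_smul_sub_sum_iteratedFDeriv {f : E → F} {x : E}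
    (hf : ContDiffAt ℝ n f x) (v : E) :
    (fun t : ℝ ↦ f (x + t • v) - ∑ k ∈ Finset.range (n + 1),
        (t ^ k / k.factorial) • iteratedFDeriv ℝ k f x fun _ ↦ v)
      =o[𝓝 0] fun t ↦ t ^ n := by
  have hf₀ : ContDiffAt ℝ n f (x + (0 : ℝ) • v) := by simpa using hf
  have line_contDiffAt : ContDiffAt ℝ n (fun t : ℝ ↦ f (x + t • v)) 0 :=
    hf₀.comp 0 (by fun_prop)
  have line_iteratedDeriv : ∀ k ∈ Finset.range (n + 1),
      iteratedDeriv k (fun t : ℝ ↦ f (x + t • v)) 0 = iteratedFDeriv ℝ k f x fun _ ↦ v := by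
    intro k hk
    have hkn : k ≤ n := Finset.mem_range_succ_iff.1 hk
    simpa using iteratedDeriv_comp_add_smul (hf₀.of_le (by exact_mod_cast hkn))
  refine (isLittleO_sub_sum_iteratedDeriv line_contDiffAt).congr (fun t ↦ ?_) fun t ↦ ?_
  · rw [sub_zero, Finset.sum_congr rfl fun k hk ↦ by rw [line_iteratedDeriv k hk]]
  · rw [sub_zero]

theorem isLittleO_smul_comp_add_mul_smul_sub_sum_iteratedFDeriv {f : E → F} {x : E}
    (hf : ContDiffAt ℝ n f x) (v : E) (c : ℝ) :
    (fun h : ℝ ↦ h • f (x + (c * h) • v) - ∑ k ∈ Finset.range (n + 1),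
        (c ^ k * h ^ (k + 1) / k.factorial) • iteratedFDeriv ℝ k f x fun _ ↦ v)
      =o[𝓝 0] fun h ↦ h ^ (n + 1) := by
  have scale_tendsto : Tendsto (fun h : ℝ ↦ c * h) (𝓝 0) (𝓝 0) :=
    Continuous.tendsto' (by fun_prop) _ _ (mul_zero c)
  have scale_isBigO : (fun h : ℝ ↦ (c * h) ^ n) =O[𝓝 0] fun h ↦ h ^ n :=
    (isBigO_const_mul_self c _ _).pow n
  have scaled_taylor :=
    ((isLittleO_comp_add_smul_sub_sum_iteratedFDeriv hf v).comp_tendsto scale_tendsto).trans_isBigO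
      scale_isBigO
  refine ((isBigO_refl (fun h : ℝ ↦ h) (𝓝 0)).smul_isLittleO scaled_taylor).congr
    (fun h ↦ ?_) fun h ↦ (pow_succ' h n).symm
  simp only [Function.comp_apply, smul_sub, Finset.smul_sum, smul_smul]
  congr! 3
  ring

end Taylor

theorem stmt15_general {E : Type*} [NormedAddCommGroup E] [NormedSpace ℝ E] {g : E → E} {x : E}
    (hg : ContDiffAt ℝ 3 g x) :
    (fun h : ℝ => (x + h • g (x + (h / 2) • g x))
      - (x + h • g x + (h ^ 2 / 2) • fderiv ℝ g x (g x)
          + (h ^ 3 / 8) • iteratedFDeriv ℝ 2 g x ![g x, g x]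
          + (h ^ 4 / 48) • iteratedFDeriv ℝ 3 g x ![g x, g x, g x]))
      =o[𝓝 0] fun h : ℝ => h ^ 4 := by
  simp only [Matrix.vec_single_eq_const, Matrix.vecCons_const]
  refine (isLittleO_smul_comp_add_mul_smul_sub_sum_iteratedFDeriv (n := 3) hg (g x) 2⁻¹).congr_left
    fun h ↦ ?_
  simp only [Finset.sum_range_succ, Finset.sum_range_zero, Nat.factorial, iteratedFDeriv_zero_apply,
    iteratedFDeriv_one_apply, ← div_eq_inv_mul]
  push_cast
  module

theorem stmt15 {D : ℕ} (g : (Fin D → ℝ) → (Fin D → ℝ)) (hg : ContDiff ℝ (⊤ : ℕ∞) g)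
    (x : Fin D → ℝ) :
    (fun h : ℝ => (x + h • g (x + (h / 2) • g x))
      - (x + h • g x + (h ^ 2 / 2) • fderiv ℝ g x (g x)
          + (h ^ 3 / 8) • iteratedFDeriv ℝ 2 g x ![g x, g x]
          + (h ^ 4 / 48) • iteratedFDeriv ℝ 3 g x ![g x, g x, g x]))
      =o[𝓝 0] fun h : ℝ => h ^ 4 :=
  stmt15_general (contDiff_infty.1 hg 3).contDiffAt
end

section
/- Let E = ℝ^D, let f : E → E be smooth (of class C^∞), let x ∈ E, and let y : ℝ → E satisfy y(0) = x and y′(t) = f(y(t)) for all t. Define f₂ : E → E by f₂(z) := (1/24)·f″(z)(f(z), f(z)) + (1/6)·f′(z)f′(z)f(z), and for h ∈ ℝ define the perturbed field g_h : E → E by g_h(z) := f(z) + h²·f₂(z). Then the explicit midpoint step applied to g_h matches the exact flow of f to fourth order: (x + h·g_h(x + (h/2)·g_h(x))) − y(h) = O(h⁴) as h → 0. -/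
open Filter Topology Asymptotics

/-!
Both the midpoint step and the exact flow are expanded to third order at `h = 0`. Writing
`P = f′ f`, `Q = f′ f′ f` and `B = f″(f, f)`, all evaluated at `x`, the flow is
`x + h f + h²/2 P + h³/6 (B + Q) + O(h⁴)`, while the midpoint rule for `f + h² k` gives
`x + h f + h²/2 P + h³ (B/8 + k) + O(h⁴)`. They agree to this order exactly when
`k x = (1/6 - 1/8) B + 1/6 Q`.

The flow is expanded by bootstrapping: an expansion of `y` gives one of `y′ = f ∘ y`, whose
integral is an expansion of `y` one order better.
-/

section Taylor

variable {E F : Type*} [NormedAddCommGroup E] [NormedSpace ℝ E]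
  [NormedAddCommGroup F] [NormedSpace ℝ F]

theorem isBigO_sub_pow_succ_of_hasFDerivAt {φ : E → F} {φ' : E → E →L[ℝ] F} {x : E} {n : ℕ}
    (hφ : ∀ᶠ z in 𝓝 x, HasFDerivAt φ (φ' z) z)
    (hφ' : φ' =O[𝓝 x] fun z ↦ ‖z - x‖ ^ n) :
    (fun z ↦ φ z - φ x) =O[𝓝 x] fun z ↦ ‖z - x‖ ^ (n + 1) := by
  obtain ⟨C, hC, hbound⟩ := hφ'.exists_pos
  obtain ⟨ε, hε, hball⟩ := Metric.eventually_nhds_iff_ball.1 (hφ.and hbound.bound)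
  refine IsBigO.of_bound C ?_
  filter_upwards [Metric.ball_mem_nhds x hε] with z hz
  have hsegment : segment ℝ x z ⊆ Metric.ball x ε :=
    (convex_ball x ε).segment_subset (Metric.mem_ball_self hε) hz
  have hderiv_le : ∀ w ∈ segment ℝ x z, ‖φ' w‖ ≤ C * ‖z - x‖ ^ n := fun w hw ↦
    calc ‖φ' w‖ ≤ C * ‖w - x‖ ^ n := by simpa using (hball w (hsegment hw)).2
      _ ≤ C * ‖z - x‖ ^ n := by gcongr; exact norm_sub_le_of_mem_segment hw
  calc ‖φ z - φ x‖ ≤ C * ‖z - x‖ ^ n * ‖z - x‖ :=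
        (convex_segment x z).norm_image_sub_le_of_norm_hasFDerivWithin_le
          (fun w hw ↦ (hball w (hsegment hw)).1.hasFDerivWithinAt) hderiv_le
          (left_mem_segment ℝ x z) (right_mem_segment ℝ x z)
    _ = C * ‖‖z - x‖ ^ (n + 1)‖ := by rw [norm_pow, norm_norm]; ring

theorem isBigO_sub_taylor_one {f : E → F} {x : E} (hf : ContDiffAt ℝ 2 f x) :
    (fun z ↦ f z - (f x + fderiv ℝ f x (z - x))) =O[𝓝 x] fun z ↦ ‖z - x‖ ^ 2 := by
  have hderiv : ∀ᶠ z in 𝓝 x, HasFDerivAt (fun z ↦ f z - (f x + fderiv ℝ f x (z - x)))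
      (fderiv ℝ f z - fderiv ℝ f x) z := by
    filter_upwards [hf.eventually (by simp)] with z hz
    exact (hz.differentiableAt (by simp)).hasFDerivAt.sub
      (((fderiv ℝ f x).hasFDerivAt.comp z ((hasFDerivAt_id z).sub_const x)).const_add (f x))
  have hderiv_isBigO : (fun z ↦ fderiv ℝ f z - fderiv ℝ f x) =O[𝓝 x] fun z ↦ ‖z - x‖ ^ 1 := by
    simpa using ((hf.fderiv_right (m := 1) le_rfl).differentiableAt (by simp)).isBigO_sub.norm_right
  simpa using isBigO_sub_pow_succ_of_hasFDerivAt hderiv hderiv_isBigO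

theorem isBigO_sub_taylor_two {f : E → F} {x : E} (hf : ContDiffAt ℝ 3 f x) :
    (fun z ↦ f z - (f x + fderiv ℝ f x (z - x) +
      (1 / 2 : ℝ) • fderiv ℝ (fderiv ℝ f) x (z - x) (z - x))) =O[𝓝 x] fun z ↦ ‖z - x‖ ^ 3 := by
  have hsymm : IsSymmSndFDerivAt ℝ f x :=
    (hf.of_le (by norm_num)).isSymmSndFDerivAt (n := 2) (by simp)
  have hderiv : ∀ᶠ z in 𝓝 x, HasFDerivAt
      (fun z ↦ f z - (f x + fderiv ℝ f x (z - x) +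
        (1 / 2 : ℝ) • fderiv ℝ (fderiv ℝ f) x (z - x) (z - x)))
      (fderiv ℝ f z - (fderiv ℝ f x + fderiv ℝ (fderiv ℝ f) x (z - x))) z := by
    filter_upwards [hf.eventually (by simp)] with z hz
    have hsub : HasFDerivAt (fun z ↦ z - x) (.id ℝ E) z := (hasFDerivAt_id z).sub_const x
    have hlinear := (fderiv ℝ f x).hasFDerivAt.comp z hsub
    have hquadratic :=
      ((fderiv ℝ (fderiv ℝ f) x).hasFDerivAt.comp z hsub).clm_apply hsub
    refine ((hz.differentiableAt (by simp)).hasFDerivAt.sub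
      ((hlinear.const_add (f x)).add (hquadratic.const_smul (1 / 2 : ℝ)))).congr_fderiv ?_
    ext w
    simp only [sub_apply, add_apply, smul_apply, ContinuousLinearMap.comp_apply,
      ContinuousLinearMap.flip_apply, ContinuousLinearMap.id_apply, Function.comp_apply,
      hsymm.eq w (z - x)]
    module
  simpa using isBigO_sub_pow_succ_of_hasFDerivAt hderiv
    (isBigO_sub_taylor_one (hf.fderiv_right (m := 2) (by norm_num)))

theorem isBigO_sub_cubic_of_hasDerivAt {y y' : ℝ → E} {a b c : E} {n : ℕ}
    (hy : ∀ᶠ t in 𝓝 0, HasDerivAt y (y' t) t)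
    (hy' : (fun t ↦ y' t - (a + t • b + (t ^ 2 / 2) • c)) =O[𝓝 0] fun t : ℝ ↦ t ^ n) :
    (fun t ↦ y t - (y 0 + t • a + (t ^ 2 / 2) • b + (t ^ 3 / 6) • c)) =O[𝓝 0]
      fun t : ℝ ↦ t ^ (n + 1) := by
  have hcubic (t : ℝ) : HasDerivAt (fun t ↦ y 0 + t • a + (t ^ 2 / 2) • b + (t ^ 3 / 6) • c)
      (a + t • b + (t ^ 2 / 2) • c) t := by
    have hlinear := ((hasDerivAt_id t).smul_const a).const_add (y 0)
    have hsquare := ((hasDerivAt_pow 2 t).div_const 2).smul_const b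
    have hcube := ((hasDerivAt_pow 3 t).div_const 6).smul_const c
    refine ((hlinear.add hsquare).add hcube).congr_deriv ?_
    simp only [Nat.cast_ofNat, Nat.reduceSub]
    module
  have hderiv := hy.mono fun t ht ↦ (ht.sub (hcubic t)).hasFDerivAt
  have hderiv_isBigO : (fun t ↦ ContinuousLinearMap.toSpanSingleton ℝ
      (y' t - (a + t • b + (t ^ 2 / 2) • c))) =O[𝓝 0] fun t : ℝ ↦ ‖t - 0‖ ^ n := by
    rw [← isBigO_norm_norm] at hy' ⊢
    simpa using hy'
  have hmain := isBigO_sub_pow_succ_of_hasFDerivAt hderiv hderiv_isBigO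
  rw [← isBigO_norm_norm] at hmain ⊢
  simpa using hmain

theorem isBigO_smul_const_self {α : Type*} (φ : α → ℝ) (v : E) (l : Filter α) :
    (fun t ↦ φ t • v) =O[l] φ := by
  simpa using (isBigO_refl φ l).smul (isBigO_const_const v (one_ne_zero (α := ℝ)) l)

theorem isBigO_sub_base_of_jet_one {c : ℝ → E} {x v : E}
    (hc : (fun t ↦ c t - (x + t • v)) =O[𝓝 0] fun t : ℝ ↦ t ^ 2) :
    (fun t ↦ c t - x) =O[𝓝 0] fun t : ℝ ↦ t := by
  have hsquare : (fun t : ℝ ↦ t ^ 2) =O[𝓝 0] fun t : ℝ ↦ t := (isLittleO_pow_id one_lt_two).isBigO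
  refine ((hc.trans hsquare).add (isBigO_smul_const_self _ v _)).congr_left fun t ↦ ?_
  module

theorem tendsto_of_jet_one {c : ℝ → E} {x v : E}
    (hc : (fun t ↦ c t - (x + t • v)) =O[𝓝 0] fun t : ℝ ↦ t ^ 2) : Tendsto c (𝓝 0) (𝓝 x) :=
  tendsto_sub_nhds_zero_iff.1 ((isBigO_sub_base_of_jet_one hc).trans_tendsto tendsto_id)

theorem isBigO_comp_sub_jet_one {f : E → F} {c : ℝ → E} {x v : E} (hf : ContDiffAt ℝ 2 f x)
    (hc : (fun t ↦ c t - (x + t • v)) =O[𝓝 0] fun t : ℝ ↦ t ^ 2) :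
    (fun t ↦ f (c t) - (f x + t • fderiv ℝ f x v)) =O[𝓝 0] fun t : ℝ ↦ t ^ 2 := by
  have hdisp := isBigO_sub_base_of_jet_one hc
  have htaylor : (fun t ↦ f (c t) - (f x + fderiv ℝ f x (c t - x))) =O[𝓝 0]
      fun t : ℝ ↦ t ^ 2 :=
    ((isBigO_sub_taylor_one hf).comp_tendsto (tendsto_of_jet_one hc)).trans
      (hdisp.norm_left.pow 2)
  have hlinear := ((fderiv ℝ f x).isBigO_comp _ _).trans hc
  refine (htaylor.add hlinear).congr_left fun t ↦ ?_
  simp only [map_sub, map_add, map_smul]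
  module

theorem isBigO_bilin_diag_sub {A : E →L[ℝ] E →L[ℝ] F} {δ : ℝ → E} {v : E}
    (hδ : (fun t ↦ δ t - t • v) =O[𝓝 0] fun t : ℝ ↦ t ^ 2) :
    (fun t ↦ A (δ t) (δ t) - t ^ 2 • A v v) =O[𝓝 0] fun t : ℝ ↦ t ^ 3 := by
  have hδ' : δ =O[𝓝 0] fun t : ℝ ↦ t := by
    simpa using isBigO_sub_base_of_jet_one (c := δ) (x := 0) (v := v) (by simpa using hδ)
  have hleft := (A.isBoundedBilinearMap.isBigO_comp (g := fun t ↦ δ t - t • v) (h := δ)).trans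
    (hδ.norm_left.mul hδ'.norm_left)
  have hright := (A.isBoundedBilinearMap.isBigO_comp
    (g := fun t : ℝ ↦ t • v) (h := fun t ↦ δ t - t • v)).trans
    ((isBigO_smul_const_self _ v _).norm_left.mul hδ.norm_left)
  refine (hleft.add (hright.congr_right fun t ↦ by ring)).congr (fun t ↦ ?_) fun t ↦ by ring
  simp only [map_sub, map_smul, sub_apply, smul_apply]
  module

theorem isBigO_comp_sub_jet_two {f : E → F} {c : ℝ → E} {x v a : E} (hf : ContDiffAt ℝ 3 f x)
    (hc : (fun t ↦ c t - (x + t • v + (t ^ 2 / 2) • a)) =O[𝓝 0] fun t : ℝ ↦ t ^ 3) :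
    (fun t ↦ f (c t) - (f x + t • fderiv ℝ f x v +
      (t ^ 2 / 2) • (fderiv ℝ (fderiv ℝ f) x v v + fderiv ℝ f x a))) =O[𝓝 0]
      fun t : ℝ ↦ t ^ 3 := by
  have hc_one : (fun t ↦ c t - (x + t • v)) =O[𝓝 0] fun t : ℝ ↦ t ^ 2 := by
    have hcube : (fun t : ℝ ↦ t ^ 3) =O[𝓝 0] fun t : ℝ ↦ t ^ 2 :=
      (isLittleO_pow_pow (by norm_num)).isBigO
    refine ((hc.trans hcube).add
      (isBigO_smul_const_self (fun t ↦ t ^ 2) ((1 / 2 : ℝ) • a) _)).congr_left fun t ↦ ?_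
    module
  have hdisp := isBigO_sub_base_of_jet_one hc_one
  have htaylor : (fun t ↦ f (c t) - (f x + fderiv ℝ f x (c t - x) +
      (1 / 2 : ℝ) • fderiv ℝ (fderiv ℝ f) x (c t - x) (c t - x))) =O[𝓝 0]
      fun t : ℝ ↦ t ^ 3 :=
    ((isBigO_sub_taylor_two hf).comp_tendsto (tendsto_of_jet_one hc_one)).trans
      (hdisp.norm_left.pow 3)
  have hlinear := ((fderiv ℝ f x).isBigO_comp _ _).trans hc
  have hquadratic : (fun t ↦ fderiv ℝ (fderiv ℝ f) x (c t - x) (c t - x) -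
      t ^ 2 • fderiv ℝ (fderiv ℝ f) x v v) =O[𝓝 0] fun t : ℝ ↦ t ^ 3 :=
    isBigO_bilin_diag_sub (by simpa only [sub_sub] using hc_one)
  refine ((htaylor.add hlinear).add (hquadratic.const_smul_left (1 / 2 : ℝ))).congr_left
    fun t ↦ ?_
  simp only [map_sub, map_add, map_smul, Pi.smul_apply]
  module

end Taylor

section Midpoint

variable {E : Type*} [NormedAddCommGroup E] [NormedSpace ℝ E]

/-- One step of size `h` of the explicit midpoint rule for the vector field `g`, from `x`. -/
noncomputable def midpointStep (g : E → E) (h : ℝ) (x : E) : E :=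
  x + h • g (x + (h / 2) • g x)

/-- The coefficient `f₂` of `h²` in the inverse modified differential equation of the explicit
midpoint rule, with `f″(z)(u, v)` encoded as `fderiv ℝ (fderiv ℝ f) z u v`. -/
noncomputable def midpointCorrection (f : E → E) (z : E) : E :=
  (1 / 24 : ℝ) • fderiv ℝ (fderiv ℝ f) z (f z) (f z) +
    (1 / 6 : ℝ) • fderiv ℝ f z (fderiv ℝ f z (f z))

theorem differentiableAt_midpointCorrection {f : E → E} {x : E} (hf : ContDiffAt ℝ 3 f x) :
    DifferentiableAt ℝ (midpointCorrection f) x := by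
  have hf' : ContDiffAt ℝ 2 (fderiv ℝ f) x := hf.fderiv_right (by norm_num)
  have df : DifferentiableAt ℝ f x := hf.differentiableAt (by simp)
  have df' : DifferentiableAt ℝ (fderiv ℝ f) x := hf'.differentiableAt (by simp)
  have df'' : DifferentiableAt ℝ (fderiv ℝ (fderiv ℝ f)) x :=
    (hf'.fderiv_right (m := 1) le_rfl).differentiableAt (by simp)
  exact (((df''.clm_apply df).clm_apply df).const_smul (1 / 24 : ℝ)).add
    ((df'.clm_apply (df'.clm_apply df)).const_smul (1 / 6 : ℝ))

theorem isBigO_flow_sub_jet_three {f : E → E} {y : ℝ → E} (hf : ContDiffAt ℝ 3 f (y 0))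
    (hy : ∀ᶠ t in 𝓝 0, HasDerivAt y (f (y t)) t) :
    (fun h ↦ y h - (y 0 + h • f (y 0) + (h ^ 2 / 2) • fderiv ℝ f (y 0) (f (y 0)) +
      (h ^ 3 / 6) • (fderiv ℝ (fderiv ℝ f) (y 0) (f (y 0)) (f (y 0)) +
        fderiv ℝ f (y 0) (fderiv ℝ f (y 0) (f (y 0)))))) =O[𝓝 0] fun h : ℝ ↦ h ^ 4 := by
  have hvel_zero : (fun h ↦ f (y h) - f (y 0)) =O[𝓝 0] fun h : ℝ ↦ h ^ 1 := by
    simpa using ((hf.differentiableAt (by simp)).comp 0 hy.self_of_nhds.differentiableAt).isBigO_sub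
  have hy_one : (fun h ↦ y h - (y 0 + h • f (y 0))) =O[𝓝 0] fun h : ℝ ↦ h ^ 2 := by
    simpa using isBigO_sub_cubic_of_hasDerivAt (b := 0) (c := 0) hy (by simpa using hvel_zero)
  have hvel_one := isBigO_comp_sub_jet_one (hf.of_le (by norm_num)) hy_one
  have hy_two : (fun h ↦ y h - (y 0 + h • f (y 0) +
      (h ^ 2 / 2) • fderiv ℝ f (y 0) (f (y 0)))) =O[𝓝 0] fun h : ℝ ↦ h ^ 3 := by
    simpa using isBigO_sub_cubic_of_hasDerivAt (c := 0) hy (by simpa using hvel_one)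
  exact isBigO_sub_cubic_of_hasDerivAt hy (isBigO_comp_sub_jet_two hf hy_two)

theorem isBigO_midpointStep_sub_jet_three {f k : E → E} {x : E} (hf : ContDiffAt ℝ 3 f x)
    (hk : DifferentiableAt ℝ k x) :
    (fun h : ℝ ↦ midpointStep (fun z ↦ f z + h ^ 2 • k z) h x -
      (x + h • f x + (h ^ 2 / 2) • fderiv ℝ f x (f x) +
        h ^ 3 • ((1 / 8 : ℝ) • fderiv ℝ (fderiv ℝ f) x (f x) (f x) + k x))) =O[𝓝 0]
      fun h : ℝ ↦ h ^ 4 := by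
  let stage (h : ℝ) : E := x + (h / 2) • (f x + h ^ 2 • k x)
  have hstage : DifferentiableAt ℝ stage 0 := by fun_prop
  have hstage_two : (fun h ↦ stage h - (x + h • (1 / 2 : ℝ) • f x + (h ^ 2 / 2) • (0 : E)))
      =O[𝓝 0] fun h : ℝ ↦ h ^ 3 := by
    refine (isBigO_smul_const_self (fun h ↦ h ^ 3) ((1 / 2 : ℝ) • k x) _).congr_left fun h ↦ ?_
    simp only [stage]
    module
  have hf_stage := isBigO_comp_sub_jet_two hf hstage_two
  have hk_stage : (fun h ↦ k (stage h) - k x) =O[𝓝 0] fun h : ℝ ↦ h := by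
    have hk' : DifferentiableAt ℝ k (stage 0) := by simpa [stage] using hk
    simpa [stage] using (hk'.comp 0 hstage).isBigO_sub
  have hsum := hf_stage.add
    (((isBigO_refl (fun h : ℝ ↦ h ^ 2) (𝓝 0)).smul hk_stage).congr_right fun h ↦ by
      rw [smul_eq_mul, ← pow_succ])
  refine ((isBigO_refl (fun h : ℝ ↦ h) (𝓝 0)).smul hsum).congr (fun h ↦ ?_)
    fun h ↦ by rw [smul_eq_mul, ← pow_succ']
  simp only [midpointStep, stage, map_smul, map_zero, smul_apply]
  module

theorem stmt16_general {f : E → E} {x : E} {y : ℝ → E} (hf : ContDiffAt ℝ 3 f x)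
    (hy0 : y 0 = x) (hy : ∀ᶠ t in 𝓝 0, HasDerivAt y (f (y t)) t) :
    (fun h : ℝ ↦ midpointStep (fun z ↦ f z + h ^ 2 • midpointCorrection f z) h x - y h) =O[𝓝 0]
      fun h : ℝ ↦ h ^ 4 := by
  subst hy0
  have hmidpoint := isBigO_midpointStep_sub_jet_three hf (differentiableAt_midpointCorrection hf)
  refine (hmidpoint.sub (isBigO_flow_sub_jet_three hf hy)).congr_left fun h ↦ ?_
  rw [midpointCorrection.eq_def f (y 0)]
  module

end Midpoint

theorem stmt16 {D : ℕ} (f : (Fin D → ℝ) → (Fin D → ℝ)) (hf : ContDiff ℝ (⊤ : ℕ∞) f)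
    (x : Fin D → ℝ) (y : ℝ → Fin D → ℝ) (hy0 : y 0 = x)
    (hy : ∀ t : ℝ, HasDerivAt y (f (y t)) t)
    (f₂ : (Fin D → ℝ) → (Fin D → ℝ))
    (hf₂ : ∀ z, f₂ z = (1 / 24 : ℝ) • iteratedFDeriv ℝ 2 f z ![f z, f z]
        + (1 / 6 : ℝ) • fderiv ℝ f z (fderiv ℝ f z (f z)))
    (g : ℝ → (Fin D → ℝ) → (Fin D → ℝ))
    (hg : ∀ (h : ℝ) (z : Fin D → ℝ), g h z = f z + h ^ 2 • f₂ z) :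
    (fun h : ℝ => (x + h • g h (x + (h / 2) • g h x)) - y h) =O[𝓝 0] fun h : ℝ => h ^ 4 := by
  obtain rfl : f₂ = midpointCorrection f := funext fun z ↦ by
    simpa [midpointCorrection, iteratedFDeriv_two_apply] using hf₂ z
  simpa only [midpointStep, hg] using
    stmt16_general (contDiff_infty.1 hf 3).contDiffAt hy0 (.of_forall hy)
end

section
/- Let h > 0, b ∈ ℝ, and p₀, q₀ ∈ ℝ. Suppose p, q : ℝ → ℝ satisfy p(0) = p₀, q(0) = q₀, p′(t) = 1 for all t, and q′(t) = sin((2π/h)·p(t) + b) for all t. Then p(h) = p₀ + h and q(h) = q₀; in particular, the time-h value (p(h), q(h)) is independent of the parameter b. -/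
/-!
Since `p` moves with unit speed, `q - F ∘ p` is constant for every antiderivative `F` of the
function driving `q`. Over one period of `F` the increment of `q` therefore vanishes, and the
antiderivative `-cos (ω x + b) / ω` of `sin (ω x + b)` has period `2π / ω`, whatever the phase `b`.
-/

open Function Real

section RCLike

variable {𝕜 E : Type*} [RCLike 𝕜] [NormedAddCommGroup E] [NormedSpace 𝕜 E]

theorem sub_eq_sub_of_forall_hasDerivAt {f g f' : 𝕜 → E} (hf : ∀ t, HasDerivAt f (f' t) t)
    (hg : ∀ t, HasDerivAt g (f' t) t) (s t : 𝕜) : f t - f s = g t - g s := by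
  have hfg (u : 𝕜) : HasDerivAt (f - g) 0 u := by
    simpa only [sub_self] using (hf u).sub (hg u)
  have hconst : f t - g t = f s - g s :=
    is_const_of_deriv_eq_zero (fun u ↦ (hfg u).differentiableAt) (fun u ↦ (hfg u).deriv) t s
  exact sub_eq_sub_iff_sub_eq_sub.mp hconst

theorem eq_add_smul_of_forall_hasDerivAt_const {f : 𝕜 → E} {v : E}
    (hf : ∀ t, HasDerivAt f v t) (s t : 𝕜) : f t = f s + (t - s) • v := by
  have hlinear (u : 𝕜) : HasDerivAt (fun u ↦ u • v) v u := by
    simpa only [one_smul] using (hasDerivAt_id' u).smul_const v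
  rw [sub_smul, ← sub_eq_sub_of_forall_hasDerivAt hf hlinear s t, add_sub_cancel]

theorem periodic_of_hasDerivAt_comp_of_periodic_antideriv {p : 𝕜 → 𝕜} {q F f : 𝕜 → E} {T : 𝕜}
    (hp : ∀ t, HasDerivAt p 1 t) (hq : ∀ t, HasDerivAt q (f (p t)) t)
    (hF : ∀ x, HasDerivAt F (f x) x) (hFT : Periodic F T) : Periodic q T := by
  intro t
  have hFp (u : 𝕜) : HasDerivAt (F ∘ p) (f (p u)) u := by
    simpa only [one_smul] using (hF (p u)).scomp u (hp u)
  have hpT : p (t + T) = p t + T := by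
    simpa using eq_add_smul_of_forall_hasDerivAt_const hp t (t + T)
  refine sub_eq_zero.mp ?_
  calc
    q (t + T) - q t = F (p (t + T)) - F (p t) := sub_eq_sub_of_forall_hasDerivAt hq hFp t (t + T)
    _ = 0 := by rw [hpT, hFT, sub_self]

end RCLike

theorem hasDerivAt_neg_cos_mul_add_div {ω : ℝ} (hω : ω ≠ 0) (b x : ℝ) :
    HasDerivAt (fun x ↦ -cos (ω * x + b) / ω) (sin (ω * x + b)) x := by
  have hphase : HasDerivAt (fun x ↦ ω * x + b) ω x := by
    simpa only [mul_one] using ((hasDerivAt_id' x).const_mul ω).add_const b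
  refine (hphase.cos.neg.div_const ω).congr_deriv ?_
  field_simp

theorem periodic_cos_mul_add (ω b : ℝ) : Periodic (fun x ↦ cos (ω * x + b)) (2 * π / ω) := by
  simpa only [div_eq_inv_mul] using (cos_periodic.add_const b).const_mul ω

theorem periodic_of_hasDerivAt_sin_mul_add {ω b : ℝ} (hω : ω ≠ 0) {p q : ℝ → ℝ}
    (hp : ∀ t, HasDerivAt p 1 t) (hq : ∀ t, HasDerivAt q (sin (ω * p t + b)) t) :
    Periodic q (2 * π / ω) :=
  periodic_of_hasDerivAt_comp_of_periodic_antideriv (f := fun x ↦ sin (ω * x + b)) hp hq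
    (hasDerivAt_neg_cos_mul_add_div hω b) ((periodic_cos_mul_add ω b).comp fun y ↦ -y / ω)

theorem stmt18 (h b p₀ q₀ : ℝ) (hh : 0 < h) (p q : ℝ → ℝ)
    (hp0 : p 0 = p₀) (hq0 : q 0 = q₀)
    (hp : ∀ t : ℝ, HasDerivAt p 1 t)
    (hq : ∀ t : ℝ, HasDerivAt q (Real.sin ((2 * Real.pi / h) * p t + b)) t) :
    p h = p₀ + h ∧ q h = q₀ := by
  have hω : 2 * π / h ≠ 0 := by positivity
  have hperiod : 2 * π / (2 * π / h) = h := div_div_cancel₀ two_pi_pos.ne'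
  have hqh : Periodic q h := hperiod ▸ periodic_of_hasDerivAt_sin_mul_add hω hp hq
  constructor
  · simpa [hp0] using eq_add_smul_of_forall_hasDerivAt_const hp 0 h
  · rw [hqh.eq, hq0]
end
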